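/- Suppose ν satisfies the Carleman condition, F ∈ S[x]^p and G ∈ S[x,y]^q are homogeneous in x of even degree, and F(x) ≻ 0 for all x ∈ X \ {0} where X = {x : G(x,y) ⪰ 0 ∀ y ∈ Y}. Then there exist N ∈ ℕ and SOS matrices Σ₀ ∈ S[x]^p, Σ ∈ S[x,y]^{pq}, homogeneous in x with deg Σ₀ = 2N + deg F and deg_x Σ = 2N + deg F − deg_x G, such that ‖x‖^{2N} F(x) = Σ₀(x) + ∫_Y ⟨Σ(x,y), G(x,y)⟩_p dν(y). -/

import Mathlib

open MeasureTheory MvPolynomial Matrix Finset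

noncomputable section

/-- A polynomial matrix is an SOS matrix if it factors as `Tᵀ * T`. -/
def IsSOSMatrix {σ : Type*} {ι : Type*} [Fintype ι]
    (M : Matrix ι ι (MvPolynomial σ ℝ)) : Prop :=
  ∃ (l : ℕ) (T : Matrix (Fin l) ι (MvPolynomial σ ℝ)), M = Tᵀ * T

/-- A polynomial is a sum of squares. -/
def IsSOSPoly {σ : Type*} (f : MvPolynomial σ ℝ) : Prop :=
  ∃ (l : ℕ) (g : Fin l → MvPolynomial σ ℝ), f = ∑ i, (g i) ^ 2

/-- The block-trace bilinear map `⟨A,B⟩_p = Tr_p (Aᵀ (I_p ⊗ B))`. -/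
def lram {R : Type*} [CommSemiring R] {ιp ιq : Type*} [Fintype ιq]
    (A : Matrix (ιp × ιq) (ιp × ιq) R) (B : Matrix ιq ιq R) :
    Matrix ιp ιp R :=
  Matrix.of fun i j => ∑ a : ιq, ∑ c : ιq, A (j, c) (i, a) * B c a

/-- The `x`-part of an exponent in the variables `x ⊕ y`. -/
def xPart {n m : ℕ} (d : (Fin n ⊕ Fin m) →₀ ℕ) : Fin n →₀ ℕ :=
  Finsupp.comapDomain Sum.inl d Sum.inl_injective.injOn

/-- Integrate out the `y`-variables of a polynomial in `(x, y)` against the measure `ν`: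
`∫_Y Σ_β H_β(x) y^β dν := Σ_β H_β(x) ∫_Y y^β dν`. -/
def integY {n m : ℕ} (ν : Measure (Fin m → ℝ))
    (q : MvPolynomial (Fin n ⊕ Fin m) ℝ) : MvPolynomial (Fin n) ℝ :=
  ∑ d ∈ q.support, MvPolynomial.monomial (xPart d)
    (q.coeff d * ∫ y, ∏ j : Fin m, (y j) ^ (d (Sum.inr j)) ∂ν)

/-- All polynomial moments of `ν` are finite. -/
def momentsFinite {m : ℕ} (ν : Measure (Fin m → ℝ)) : Prop :=
  ∀ h : MvPolynomial (Fin m) ℝ, Integrable (fun y => |MvPolynomial.eval y h|) ν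

/-- `ν` has support exactly `Y`. -/
def hasSupport {m : ℕ} (ν : Measure (Fin m → ℝ)) (Y : Set (Fin m → ℝ)) : Prop :=
  ν Yᶜ = 0 ∧ ∀ U : Set (Fin m → ℝ), IsOpen U → (U ∩ Y).Nonempty → 0 < ν U

/-- The multivariate Carleman condition on `ν`. -/
def Carleman {m : ℕ} (ν : Measure (Fin m → ℝ)) : Prop :=
  ∀ j : Fin m, ¬ Summable (fun d : ℕ =>
    (∫ y, (y j) ^ (2 * (d + 1)) ∂ν) ^ (-(1 : ℝ) / (2 * (d + 1))))

/-- Evaluate a polynomial matrix at a point. -/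
def evalMat {σ : Type*} {ι : Type*} (x : σ → ℝ)
    (M : Matrix ι ι (MvPolynomial σ ℝ)) : Matrix ι ι ℝ :=
  M.map (MvPolynomial.eval x)

/-- The spectral (L²-operator) norm of a real matrix. -/
def specNorm {ι : Type*} [Fintype ι] [DecidableEq ι] (A : Matrix ι ι ℝ) : ℝ :=
  ‖(Matrix.toEuclideanLin A).toContinuousLinearMap‖

/-- Degree of a polynomial matrix. -/
def matDeg {ι σ : Type*} [Fintype ι] (M : Matrix ι ι (MvPolynomial σ ℝ)) : ℕ :=
  Finset.univ.sup fun i => Finset.univ.sup fun j => (M i j).totalDegree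

/-- Degree in `x` of a polynomial in `(x,y)`. -/
def degX {n m : ℕ} (q : MvPolynomial (Fin n ⊕ Fin m) ℝ) : ℕ :=
  q.support.sup fun d => ∑ i : Fin n, d (Sum.inl i)

/-- Degree in `y` of a polynomial in `(x,y)`. -/
def degY {n m : ℕ} (q : MvPolynomial (Fin n ⊕ Fin m) ℝ) : ℕ :=
  q.support.sup fun d => ∑ j : Fin m, d (Sum.inr j)

def matDegX {ι : Type*} {n m : ℕ} [Fintype ι]
    (M : Matrix ι ι (MvPolynomial (Fin n ⊕ Fin m) ℝ)) : ℕ :=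
  Finset.univ.sup fun i => Finset.univ.sup fun j => degX (M i j)

def matDegY {ι : Type*} {n m : ℕ} [Fintype ι]
    (M : Matrix ι ι (MvPolynomial (Fin n ⊕ Fin m) ℝ)) : ℕ :=
  Finset.univ.sup fun i => Finset.univ.sup fun j => degY (M i j)

/-- Homogeneity in `x` of a polynomial in `(x,y)`. -/
def IsHomogeneousX {n m : ℕ} (q : MvPolynomial (Fin n ⊕ Fin m) ℝ) (k : ℕ) : Prop :=
  ∀ d ∈ q.support, ∑ i : Fin n, d (Sum.inl i) = k

/-- Positive semidefiniteness of the full (infinite) moment matrix `M(S)`: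
every finite principal block submatrix is PSD. -/
def MomentPSD {n p : ℕ} (S : (Fin n →₀ ℕ) → Matrix (Fin p) (Fin p) ℝ) : Prop :=
  ∀ (N : ℕ) (idx : Fin N → (Fin n →₀ ℕ)),
    (Matrix.of fun a b : Fin N × Fin p => S (idx a.1 + idx b.1) a.2 b.2).PosSemidef

/-- Exponents of degree at most `d` in `n` variables. -/
def Expo (n d : ℕ) := {a : Fin n → Fin (d + 1) // ∑ i, (a i : ℕ) ≤ d}

instance (n d : ℕ) : Fintype (Expo n d) := by unfold Expo; infer_instance
instance (n d : ℕ) : DecidableEq (Expo n d) := by unfold Expo; infer_instance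

def expF {n d : ℕ} (a : Fin n → Fin (d + 1)) : Fin n →₀ ℕ :=
  Finsupp.equivFunOnFinite.symm (fun i => (a i : ℕ))

/-- Truncated moment matrix `M_d(S)`. -/
def momentMat {n p : ℕ} (S : (Fin n →₀ ℕ) → Matrix (Fin p) (Fin p) ℝ) (d : ℕ) :
    Matrix (Expo n d × Fin p) (Expo n d × Fin p) ℝ :=
  Matrix.of fun a b => S (expF a.1.1 + expF b.1.1) a.2 b.2

/-- Truncated localizing matrix `M^ν_{d,k}(G S)`. -/
def locMat {n m p q : ℕ} (ν : Measure (Fin m → ℝ))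
    (G : Matrix (Fin q) (Fin q) (MvPolynomial (Fin n ⊕ Fin m) ℝ))
    (S : (Fin n →₀ ℕ) → Matrix (Fin p) (Fin p) ℝ) (d k : ℕ) :
    Matrix ((Expo n d × Expo m k) × (Fin p × Fin q))
           ((Expo n d × Expo m k) × (Fin p × Fin q)) ℝ :=
  Matrix.of fun r c =>
    ∑ e ∈ (G r.2.2 c.2.2).support,
      (∫ y, ∏ j : Fin m, (y j) ^ (e (Sum.inr j) + (r.1.2.1 j : ℕ) + (c.1.2.1 j : ℕ)) ∂ν) *
      ((G r.2.2 c.2.2).coeff e *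
        S (expF r.1.1.1 + expF c.1.1.1 + xPart e) r.2.1 c.2.1)

/-- The Riesz functional `L_S(H) = Σ_α tr(H_α S_α)`. -/
def RieszL {n p : ℕ} (S : (Fin n →₀ ℕ) → Matrix (Fin p) (Fin p) ℝ)
    (H : Matrix (Fin p) (Fin p) (MvPolynomial (Fin n) ℝ)) : ℝ :=
  ∑ i, ∑ j, ∑ α ∈ (H i j).support, (H i j).coeff α * S α j i

end

/-- One step of Bang's argument: smallness of order `N + 1` of the derivatives at `x` propagates to
smallness of order `N` over a distance `M N / (e * M (N + 1))`. -/
theorem bang_step {f : ℕ → ℝ → ℂ} (hf : ∀ k t, HasDerivAt (f k) (f (k + 1) t) t)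
    {M : ℕ → ℝ} (hM : ∀ k, 0 < M k) (hmono : Monotone fun k => M (k + 1) / M k)
    (hb : ∀ k t, ‖f k t‖ ≤ M k) {N : ℕ} {x h : ℝ} (h0 : 0 ≤ h)
    (hh : h ≤ (Real.exp 1)⁻¹ * (M N / M (N + 1)))
    (hx : ∀ n ≤ N + 1, ‖f n x‖ ≤ Real.exp (n - (N + 1 : ℕ)) * M n) :
    ∀ n ≤ N, ‖f n (x + h)‖ ≤ Real.exp (n - N) * M n := by
  set r : ℝ := M (N + 1) / M N with hr
  have hr0 : 0 < r := div_pos (hM _) (hM _)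
  set e : ℝ := Real.exp 1 with he
  have he0 : 0 < e := Real.exp_pos 1
  have key : ∀ j ≤ N + 1, ∀ t, x ≤ t →
      ‖f (N + 1 - j) t‖ ≤
        Real.exp (((N + 1 - j : ℕ) : ℝ) - (N + 1 : ℕ)) * M (N + 1 - j) *
          Real.exp (e * r * (t - x)) := by
    intro j
    induction j with
    | zero =>
      intro _ t ht
      have h1 : 1 ≤ Real.exp (e * r * (t - x)) :=
        Real.one_le_exp (by have := sub_nonneg.2 ht; positivity)
      have := hb (N + 1) t
      simp only [Nat.sub_zero, sub_self, Real.exp_zero, one_mul]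
      nlinarith [hM (N + 1)]
    | succ j ih =>
      intro hj t ht
      obtain ⟨k, hk⟩ : ∃ k, N + 1 - (j + 1) = k := ⟨_, rfl⟩
      have hk1 : N + 1 - j = k + 1 := by omega
      have hkN : k ≤ N := by omega
      have ih' := ih (by omega)
      rw [hk1] at ih'
      rw [hk]
      set A : ℝ := Real.exp ((k : ℝ) - (N + 1 : ℕ)) * M k with hA
      have hA0 : 0 < A := mul_pos (Real.exp_pos _) (hM k)
      have hB : ∀ u, HasDerivAt (fun u => A * Real.exp (e * r * (u - x)))
          (A * (Real.exp (e * r * (u - x)) * (e * r))) u := by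
        intro u
        have h1 : HasDerivAt (fun u => e * r * (u - x)) (e * r) u := by
          simpa using ((hasDerivAt_id u).sub_const x).const_mul (e * r)
        exact (h1.exp).const_mul A
      refine image_norm_le_of_norm_deriv_right_le_deriv_boundary (a := x) (b := t)
        (f := f k) (f' := f (k + 1)) (fun u _ => (hf k u).continuousAt.continuousWithinAt)
        (fun u _ => (hf k u).hasDerivWithinAt) ?_ hB ?_ ⟨ht, le_rfl⟩
      · simpa [hA] using hx k (by omega)
      · intro u hu
        refine (ih' u hu.1).trans ?_
        have h1 : M (k + 1) ≤ r * M k := by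
          have := hmono hkN
          simp only at this
          rwa [div_le_iff₀ (hM k)] at this
        have h2 : Real.exp (((k + 1 : ℕ) : ℝ) - (N + 1 : ℕ)) =
            e * Real.exp ((k : ℝ) - (N + 1 : ℕ)) := by
          rw [he, ← Real.exp_add]; congr 1; push_cast; ring
        rw [h2, hA]
        have h3 := Real.exp_pos ((k : ℝ) - (N + 1 : ℕ))
        have h4 := Real.exp_pos (e * r * (u - x))
        calc e * Real.exp ((k : ℝ) - (N + 1 : ℕ)) * M (k + 1) * Real.exp (e * r * (u - x))
            ≤ e * Real.exp ((k : ℝ) - (N + 1 : ℕ)) * (r * M k) * Real.exp (e * r * (u - x)) := by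
              gcongr
          _ = _ := by ring
  intro n hn
  have h1 := key (N + 1 - n) (by omega) (x + h) (by linarith)
  rw [show N + 1 - (N + 1 - n) = n by omega] at h1
  refine h1.trans ?_
  have h2 : e * r * (x + h - x) ≤ 1 := by
    calc e * r * (x + h - x) = e * r * h := by ring
      _ ≤ e * r * (e⁻¹ * (M N / M (N + 1))) := by gcongr
      _ = 1 := by
        rw [hr]; have := (hM N).ne'; have := (hM (N + 1)).ne'; field_simp
  calc _ ≤ Real.exp ((n : ℝ) - (N + 1 : ℕ)) * M n * Real.exp 1 := by
        have := (hM n).le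
        gcongr
    _ = Real.exp (n - N) * M n := by
        rw [mul_right_comm, ← Real.exp_add]; congr 2; push_cast; ring

/-- **Denjoy–Carleman quasi-analyticity** (Bang's proof), on the positive half line. -/
theorem eq_zero_of_quasianalytic_of_nonneg {f : ℕ → ℝ → ℂ}
    (hf : ∀ k t, HasDerivAt (f k) (f (k + 1) t) t)
    {M : ℕ → ℝ} (hM : ∀ k, 0 < M k) (hmono : Monotone fun k => M (k + 1) / M k)
    (hb : ∀ k t, ‖f k t‖ ≤ M k) (h0 : ∀ k, f k 0 = 0)
    (hdiv : ¬ Summable fun k => M k / M (k + 1)) {t : ℝ} (ht : 0 ≤ t) : f 0 t = 0 := by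
  have hpos : ∀ k, 0 ≤ M k / M (k + 1) := fun k => (div_pos (hM _) (hM _)).le
  have key : ∀ L N : ℕ, ∀ x, 0 ≤ x →
      x ≤ (Real.exp 1)⁻¹ * ∑ j ∈ range L, M (N + j) / M (N + j + 1) →
      ∀ n ≤ N, ‖f n x‖ ≤ Real.exp (n - N) * M n := by
    intro L
    induction L with
    | zero =>
      intro N x hx hx' n _
      obtain rfl : x = 0 := le_antisymm (by simpa using hx') hx
      rw [h0, norm_zero]
      exact mul_nonneg (Real.exp_pos _).le (hM n).le
    | succ L ih =>
      intro N x hx hx'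
      set s := (Real.exp 1)⁻¹ * ∑ j ∈ range L, M (N + 1 + j) / M (N + 1 + j + 1) with hs
      have hs0 : 0 ≤ s := mul_nonneg (by positivity) (sum_nonneg fun j _ => hpos _)
      rw [sum_range_succ', mul_add] at hx'
      have hs' : (Real.exp 1)⁻¹ * ∑ j ∈ range L, M (N + (j + 1)) / M (N + (j + 1) + 1) = s := by
        rw [hs]; congr 1; refine sum_congr rfl fun j _ => ?_
        rw [show N + (j + 1) = N + 1 + j by ring]
      rw [hs', Nat.add_zero] at hx'
      have h1 := bang_step hf hM hmono hb (N := N) (x := min x s) (h := x - min x s)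
        (sub_nonneg.2 (min_le_left _ _))
        (by
          rcases le_total x s with h | h
          · rw [min_eq_left h, sub_self]; exact mul_nonneg (by positivity) (hpos N)
          · rw [min_eq_right h]; linarith)
        (ih (N + 1) (min x s) (le_min hx hs0) (min_le_right _ _))
      simpa using h1
  have hN : ∀ N : ℕ, ‖f 0 t‖ ≤ Real.exp (-N) * M 0 := by
    intro N
    have h1 : ¬ Summable fun j => M (N + j) / M (N + j + 1) := by
      intro h
      apply hdiv
      rw [← summable_nat_add_iff N]
      simpa [add_comm, add_left_comm] using h
    have h2 := (not_summable_iff_tendsto_nat_atTop_of_nonneg (fun j => hpos (N + j))).1 h1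
    obtain ⟨L, hL⟩ := (h2.eventually_ge_atTop (Real.exp 1 * t)).exists
    have := key L N t ht (by
      rw [inv_mul_eq_div, le_div_iff₀ (Real.exp_pos 1)]; linarith) 0 (Nat.zero_le _)
    simpa using this
  have hlim : Filter.Tendsto (fun N : ℕ => Real.exp (-N) * M 0) Filter.atTop (nhds 0) := by
    have := (Real.tendsto_exp_neg_atTop_nhds_zero.comp
      (tendsto_natCast_atTop_atTop (R := ℝ))).mul_const (M 0)
    simpa [Function.comp_def] using this
  exact norm_le_zero_iff.1 (ge_of_tendsto' hlim hN)

/-- **Denjoy–Carleman quasi-analyticity**: a smooth function with derivatives bounded by a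
log-convex sequence `M` with `∑ M k / M (k + 1) = ∞` which vanishes to infinite order at `0`
is zero. -/
theorem eq_zero_of_quasianalytic {f : ℕ → ℝ → ℂ}
    (hf : ∀ k t, HasDerivAt (f k) (f (k + 1) t) t)
    {M : ℕ → ℝ} (hM : ∀ k, 0 < M k) (hmono : Monotone fun k => M (k + 1) / M k)
    (hb : ∀ k t, ‖f k t‖ ≤ M k) (h0 : ∀ k, f k 0 = 0)
    (hdiv : ¬ Summable fun k => M k / M (k + 1)) (t : ℝ) : f 0 t = 0 := by
  rcases le_total 0 t with ht | ht
  · exact eq_zero_of_quasianalytic_of_nonneg hf hM hmono hb h0 hdiv ht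
  · have := eq_zero_of_quasianalytic_of_nonneg (f := fun k t => (-1) ^ k * f k (-t))
      (fun k u => by
        have h1 := ((hf k (-u)).scomp u (hasDerivAt_neg u)).const_mul ((-1 : ℂ) ^ k)
        rw [neg_one_smul] at h1
        rw [pow_succ, mul_neg_one, neg_mul, ← mul_neg]
        exact h1)
      hM hmono (fun k u => by simpa using hb k (-u)) (fun k => by simp [h0]) hdiv
      (t := -t) (by linarith)
    simpa using this

/-- **Carleman's inequality**, qualitative form: the sequence of geometric means of a summable
positive sequence is summable. -/
theorem summable_geom_mean {a : ℕ → ℝ} (ha : ∀ n, 0 < a n) (hs : Summable a) :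
    Summable fun n : ℕ => (∏ j ∈ range (n + 1), a j) ^ ((1 : ℝ) / (n + 1)) := by
  have hbound : ∀ n : ℕ, (∏ j ∈ range (n + 1), a j) ^ ((1 : ℝ) / (n + 1)) ≤
      Real.exp 1 / (n + 1) ^ 2 * ∑ j ∈ range (n + 1), (j + 1) * a j := by
    intro n
    have hn : (0 : ℝ) < n + 1 := by positivity
    have hfac : (0 : ℝ) < (n + 1).factorial := by positivity
    have h1 : ∏ j ∈ range (n + 1), ((j + 1 : ℝ) * a j) =
        (n + 1).factorial * ∏ j ∈ range (n + 1), a j := by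
      rw [prod_mul_distrib, ← prod_range_add_one_eq_factorial]; push_cast; rfl
    have h2 := Real.geom_mean_le_arith_mean (range (n + 1)) (fun _ => 1)
      (fun j => (j + 1 : ℝ) * a j) (fun _ _ => zero_le_one) (by simp; positivity)
      (fun j _ => mul_nonneg (by positivity) (ha j).le)
    simp only [Real.rpow_one, one_mul, sum_const, card_range, nsmul_eq_mul, mul_one] at h2
    rw [h1, Real.mul_rpow hfac.le (prod_nonneg fun j _ => (ha j).le)] at h2
    have h3 : (n + 1 : ℝ) / Real.exp 1 ≤ ((n + 1).factorial : ℝ) ^ (((n + 1 : ℕ) : ℝ)⁻¹) := by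
      have h4 := Real.pow_div_factorial_le_exp (n + 1 : ℝ) hn.le (n + 1)
      have h5 : ((n + 1 : ℝ) / Real.exp 1) ^ (n + 1) ≤ (n + 1).factorial := by
        rw [div_pow, div_le_iff₀ (by positivity), ← Real.exp_nat_mul]
        rw [div_le_iff₀ hfac] at h4
        push_cast
        rw [mul_one]; linarith
      calc (n + 1 : ℝ) / Real.exp 1
          = (((n + 1 : ℝ) / Real.exp 1) ^ (n + 1)) ^ (((n + 1 : ℕ) : ℝ)⁻¹) :=
            (Real.pow_rpow_inv_natCast (by positivity) (by omega)).symm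
        _ ≤ _ := Real.rpow_le_rpow (by positivity) h5 (by positivity)
    have hG : 0 ≤ (∏ j ∈ range (n + 1), a j) ^ (((n + 1 : ℕ) : ℝ)⁻¹) :=
      Real.rpow_nonneg (prod_nonneg fun j _ => (ha j).le) _
    have h6 := (mul_le_mul_of_nonneg_right h3 hG).trans h2
    have he := Real.exp_pos 1
    push_cast at h6
    rw [one_div]
    rw [le_div_iff₀ hn, div_mul_eq_mul_div, div_mul_eq_mul_div, div_le_iff₀ he] at h6
    rw [div_mul_eq_mul_div, le_div_iff₀ (by positivity)]
    nlinarith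
  have hsq : ∀ j N : ℕ, j ≤ N →
      ∑ n ∈ Ico j N, (1 : ℝ) / ((n : ℝ) + 1) ^ 2 ≤ 2 / (2 * (j : ℝ) + 1) - 2 / (2 * (N : ℝ) + 1) := by
    intro j N hN
    induction N, hN using Nat.le_induction with
    | base => simp
    | succ N hN ih =>
      rw [sum_Ico_succ_top hN]
      have h1 : (1 : ℝ) / ((N : ℝ) + 1) ^ 2 ≤
          2 / (2 * (N : ℝ) + 1) - 2 / (2 * ((N + 1 : ℕ) : ℝ) + 1) := by
        push_cast
        rw [div_sub_div _ _ (by positivity) (by positivity), div_le_div_iff₀ (by positivity)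
          (by positivity)]
        nlinarith
      linarith
  have hsq' : ∀ j N : ℕ, j ≤ N →
      ∑ n ∈ Ico j N, (1 : ℝ) / ((n : ℝ) + 1) ^ 2 ≤ 2 / ((j : ℝ) + 1) := fun j N h =>
    (hsq j N h).trans <|
      (sub_le_self _ (by positivity)).trans (by gcongr; linarith [j.cast_nonneg (α := ℝ)])
  refine summable_of_sum_range_le (c := 2 * Real.exp 1 * ∑' j, a j)
    (fun n => Real.rpow_nonneg (prod_nonneg fun j _ => (ha j).le) _) fun N => ?_
  calc _ ≤ ∑ n ∈ range N, Real.exp 1 / ((n : ℝ) + 1) ^ 2 * ∑ j ∈ range (n + 1), (j + 1) * a j :=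
        sum_le_sum fun n _ => hbound n
    _ = ∑ n ∈ Ico 0 N, ∑ j ∈ Ico 0 (n + 1),
          Real.exp 1 * ((j + 1) * a j) * (1 / ((n : ℝ) + 1) ^ 2) := by
        simp only [← range_eq_Ico, mul_sum]
        refine sum_congr rfl fun n _ => sum_congr rfl fun j _ => by ring
    _ = ∑ j ∈ Ico 0 N, Real.exp 1 * ((j + 1) * a j) *
          ∑ n ∈ Ico j N, (1 : ℝ) / ((n : ℝ) + 1) ^ 2 := by
        rw [← sum_Ico_Ico_comm]
        simp only [mul_sum]
    _ ≤ ∑ j ∈ Ico 0 N, 2 * Real.exp 1 * a j := by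
        refine sum_le_sum fun j hj => ?_
        have := ha j
        calc _ ≤ Real.exp 1 * ((j + 1) * a j) * (2 / ((j : ℝ) + 1)) := by
              gcongr
              exact hsq' j N (mem_Ico.1 hj).2.le
          _ = _ := by field_simp
    _ ≤ 2 * Real.exp 1 * ∑' j, a j := by
        rw [← mul_sum, ← range_eq_Ico]
        gcongr
        exact hs.sum_le_tsum _ fun j _ => (ha j).le

/-- For a log-convex sequence `m`, the Carleman condition on `m` forces the divergence of the sum
of the ratios `m k / m (k + 1)`, raised to the power `1 / 2`, and also along even indices. -/
theorem not_summable_ratio_of_carleman {m : ℕ → ℝ} (hm : ∀ k, 0 < m k)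
    (hlog : ∀ k, m (k + 1) ^ 2 ≤ m k * m (k + 2))
    (hcar : ¬ Summable fun d : ℕ => m (d + 1) ^ (-(1 : ℝ) / (2 * (d + 1)))) :
    ¬ Summable fun k : ℕ => (m (2 * k) / m (2 * (k + 1))) ^ ((1 : ℝ) / 4) := by
  intro hs
  apply hcar
  set a : ℕ → ℝ := fun k => √(m k / m (k + 1)) with ha
  have ha0 : ∀ k, 0 < a k := fun k => Real.sqrt_pos.2 (div_pos (hm _) (hm _))
  have hanti : ∀ k, a (k + 1) ≤ a k := fun k => Real.sqrt_le_sqrt <| by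
    rw [div_le_div_iff₀ (hm _) (hm _)]
    nlinarith [hlog k]
  have hodd : Summable fun k => a (2 * k + 1) := by
    refine Summable.of_nonneg_of_le (fun k => (ha0 _).le) (fun k => ?_) hs
    have h1 : a (2 * k + 1) ^ 4 ≤ m (2 * k) / m (2 * (k + 1)) := by
      have e1 : a (2 * k + 1) ^ 2 = m (2 * k + 1) / m (2 * (k + 1)) :=
        Real.sq_sqrt (div_pos (hm _) (hm _)).le
      have e2 : a (2 * k) ^ 2 = m (2 * k) / m (2 * k + 1) :=
        Real.sq_sqrt (div_pos (hm _) (hm _)).le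
      have h2 : a (2 * k + 1) ^ 2 ≤ a (2 * k) ^ 2 :=
        pow_le_pow_left₀ (ha0 _).le (hanti _) 2
      calc a (2 * k + 1) ^ 4 = a (2 * k + 1) ^ 2 * a (2 * k + 1) ^ 2 := by ring
        _ ≤ a (2 * k) ^ 2 * a (2 * k + 1) ^ 2 := by gcongr
        _ = _ := by
          rw [e1, e2]; have := (hm (2 * k + 1)).ne'; field_simp
    calc a (2 * k + 1) = (a (2 * k + 1) ^ 4) ^ (((4 : ℕ) : ℝ)⁻¹) :=
          (Real.pow_rpow_inv_natCast (ha0 _).le (by norm_num)).symm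
      _ ≤ _ := by
        rw [one_div]
        exact_mod_cast Real.rpow_le_rpow (pow_nonneg (ha0 _).le _) h1 (by norm_num)
  have heven : Summable fun k => a (2 * k + 2) :=
    Summable.of_nonneg_of_le (fun k => (ha0 _).le) (fun k => hanti _) hodd
  have hsum : Summable a := by
    rw [← summable_nat_add_iff 1]
    exact (HasSum.even_add_odd (f := fun k => a (k + 1)) hodd.hasSum heven.hasSum).summable
  have hgm := summable_geom_mean ha0 hsum
  set c : ℝ := min 1 (m 0) with hc
  have hc0 : 0 < c := lt_min one_pos (hm 0)
  refine Summable.of_nonneg_of_le (fun d => Real.rpow_nonneg (hm _).le _) (fun d => ?_)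
    (hgm.mul_left c⁻¹)
  have hprod : ∏ j ∈ range (d + 1), a j = √(m 0 / m (d + 1)) := by
    induction d with
    | zero => simp [ha]
    | succ d ih =>
      rw [prod_range_succ, ih, ha, ← Real.sqrt_mul (div_pos (hm _) (hm _)).le]
      have := (hm (d + 1)).ne'
      congr 1; field_simp
  rw [hprod, Real.sqrt_eq_rpow, ← Real.rpow_mul (div_pos (hm _) (hm _)).le,
    Real.div_rpow (hm _).le (hm _).le]
  have hexp : (1 : ℝ) / 2 * (1 / (d + 1)) = 1 / (2 * (d + 1)) := by field_simp
  rw [hexp, neg_div, Real.rpow_neg (hm _).le]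
  have h3 : c ≤ m 0 ^ ((1 : ℝ) / (2 * (d + 1))) := by
    have hle : (1 : ℝ) / (2 * (d + 1)) ≤ 1 := by
      rw [div_le_one (by positivity)]; linarith [d.cast_nonneg (α := ℝ)]
    calc c ≤ c ^ ((1 : ℝ) / (2 * (d + 1))) := by
          simpa using Real.rpow_le_rpow_of_exponent_ge hc0 (min_le_left _ _) hle
      _ ≤ _ := Real.rpow_le_rpow hc0.le (min_le_right _ _) (by positivity)
  have h4 : 0 < m (d + 1) ^ ((1 : ℝ) / (2 * (d + 1))) := Real.rpow_pos_of_pos (hm _) _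
  rw [inv_mul_eq_div, le_div_iff₀ hc0, inv_mul_eq_div]
  gcongr

/-- The Cauchy–Schwarz inequality for integrals of real functions. -/
theorem integral_mul_sq_le {α : Type*} [MeasurableSpace α] {μ : Measure α} {f g : α → ℝ}
    (hf : Integrable (fun x => f x ^ 2) μ) (hg : Integrable (fun x => g x ^ 2) μ)
    (hfg : Integrable (fun x => f x * g x) μ) :
    (∫ x, f x * g x ∂μ) ^ 2 ≤ (∫ x, f x ^ 2 ∂μ) * ∫ x, g x ^ 2 ∂μ := by
  have h : ∀ t : ℝ, 0 ≤ (∫ x, f x ^ 2 ∂μ) * (t * t) + (2 * ∫ x, f x * g x ∂μ) * t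
      + ∫ x, g x ^ 2 ∂μ := by
    intro t
    have : ∫ x, (t * f x + g x) ^ 2 ∂μ = (∫ x, f x ^ 2 ∂μ) * (t * t)
        + (2 * ∫ x, f x * g x ∂μ) * t + ∫ x, g x ^ 2 ∂μ := by
      have h1 : Integrable (fun x => f x ^ 2 * (t * t) + 2 * (f x * g x) * t) μ :=
        (hf.mul_const _).add ((hfg.const_mul _).mul_const _)
      rw [← integral_mul_const, ← integral_const_mul, ← integral_mul_const,
        ← integral_add (hf.mul_const _) ((hfg.const_mul _).mul_const _), ← integral_add h1 hg]
      congr 1; ext x; ring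
    rw [← this]
    exact integral_nonneg fun x => sq_nonneg _
  have := discrim_le_zero h
  rw [discrim] at this
  nlinarith

theorem momentsFinite.integrable_eval {m : ℕ} {ν : Measure (Fin m → ℝ)} (hmom : momentsFinite ν)
    (h : MvPolynomial (Fin m) ℝ) : Integrable (fun y => eval y h) ν :=
  (integrable_norm_iff (MvPolynomial.continuous_eval h).aestronglyMeasurable).1 (hmom h)

theorem momentsFinite.isFiniteMeasure {m : ℕ} {ν : Measure (Fin m → ℝ)} (hmom : momentsFinite ν) :
    IsFiniteMeasure ν := by
  have := hmom.integrable_eval 1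
  simp only [map_one] at this
  exact ((integrable_const_iff (c := (1 : ℝ))).1 this).resolve_left one_ne_zero

theorem momentsFinite.integrable_pow {m : ℕ} {ν : Measure (Fin m → ℝ)} (hmom : momentsFinite ν)
    (j : Fin m) (k : ℕ) : Integrable (fun y : Fin m → ℝ => y j ^ k) ν := by
  simpa using hmom.integrable_eval (X j ^ k)

theorem Carleman.moment_pos {m : ℕ} {ν : Measure (Fin m → ℝ)} (hmom : momentsFinite ν)
    (hcar : Carleman ν) (j : Fin m) (k : ℕ) : 0 < ∫ y, y j ^ (2 * k) ∂ν := by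
  refine (integral_nonneg fun y => (even_two_mul k).pow_nonneg _).lt_of_ne' fun h0 => hcar j ?_
  rw [integral_eq_zero_iff_of_nonneg (fun y => (even_two_mul k).pow_nonneg _)
    (hmom.integrable_pow j _)] at h0
  have : ∀ d : ℕ, ∫ y, y j ^ (2 * (d + 1)) ∂ν = 0 := fun d => by
    refine integral_eq_zero_of_ae ?_
    filter_upwards [h0] with y hy
    have hy0 : y j = 0 := eq_zero_of_pow_eq_zero hy
    simp [hy0]
  simp only [this]
  refine summable_zero.congr fun d => ?_
  rw [Real.zero_rpow]
  positivity

theorem moment_logConvex {m : ℕ} {ν : Measure (Fin m → ℝ)} (hmom : momentsFinite ν)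
    (j : Fin m) (k : ℕ) :
    (∫ y, y j ^ (2 * (k + 1)) ∂ν) ^ 2 ≤
      (∫ y, y j ^ (2 * k) ∂ν) * ∫ y, y j ^ (2 * (k + 2)) ∂ν := by
  have := integral_mul_sq_le (μ := ν) (f := fun y : Fin m → ℝ => y j ^ k)
    (g := fun y : Fin m → ℝ => y j ^ (k + 2))
    (by simpa only [← pow_mul] using hmom.integrable_pow j _)
    (by simpa only [← pow_mul] using hmom.integrable_pow j _)
    (by simpa only [← pow_add] using hmom.integrable_pow j _)
  simp only [← pow_mul, ← pow_add] at this
  convert this using 5 <;> ring_nf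

/-- Under the Carleman condition, a family of derivatives dominated by
`K * (∫ y_j ^ (4 k)) ^ (1 / 4)` is quasi-analytic. -/
theorem Carleman.eq_zero {m : ℕ} {ν : Measure (Fin m → ℝ)} (hmom : momentsFinite ν)
    (hcar : Carleman ν) (j : Fin m) {f : ℕ → ℝ → ℂ}
    (hf : ∀ k t, HasDerivAt (f k) (f (k + 1) t) t) {K : ℝ} (hK : 0 < K)
    (hb : ∀ k t, ‖f k t‖ ≤ K * (∫ y, y j ^ (2 * (2 * k)) ∂ν) ^ ((1 : ℝ) / 4))
    (h0 : ∀ k, f k 0 = 0) (t : ℝ) : f 0 t = 0 := by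
  set μ : ℕ → ℝ := fun k => ∫ y, y j ^ (2 * k) ∂ν with hμ
  have hpos : ∀ k, 0 < μ k := hcar.moment_pos hmom j
  have hlog : ∀ k, μ (k + 1) ^ 2 ≤ μ k * μ (k + 2) := moment_logConvex hmom j
  have hmono : Monotone fun k => μ (k + 1) / μ k := monotone_nat_of_le_succ fun k => by
    rw [div_le_div_iff₀ (hpos _) (hpos _)]
    nlinarith [hlog k]
  refine eq_zero_of_quasianalytic (M := fun k => K * μ (2 * k) ^ ((1 : ℝ) / 4)) hf
    (fun k => mul_pos hK (Real.rpow_pos_of_pos (hpos _) _)) ?_ hb h0 ?_ t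
  · refine monotone_nat_of_le_succ fun k => ?_
    rw [mul_div_mul_left _ _ hK.ne', mul_div_mul_left _ _ hK.ne',
      ← Real.div_rpow (hpos _).le (hpos _).le, ← Real.div_rpow (hpos _).le (hpos _).le]
    have hsplit : ∀ i, μ (2 * (i + 1)) / μ (2 * i) =
        μ (2 * i + 1 + 1) / μ (2 * i + 1) * (μ (2 * i + 1) / μ (2 * i)) := fun i => by
      have := (hpos (2 * i + 1)).ne'
      have := (hpos (2 * i)).ne'
      rw [show 2 * (i + 1) = 2 * i + 1 + 1 by ring]
      field_simp
    refine Real.rpow_le_rpow (div_pos (hpos _) (hpos _)).le ?_ (by norm_num)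
    rw [hsplit k, hsplit (k + 1)]
    refine mul_le_mul (hmono (by omega)) (hmono (by omega)) (div_pos (hpos _) (hpos _)).le
      (div_pos (hpos _) (hpos _)).le
  · have := not_summable_ratio_of_carleman hpos hlog (hcar j)
    convert this using 3 with k
    rw [mul_div_mul_left _ _ hK.ne', ← Real.div_rpow (hpos _).le (hpos _).le]

theorem MvPolynomial.memLp_two_sqrt_mul {m : ℕ} {ν : Measure (Fin m → ℝ)} (hmom : momentsFinite ν)
    {W : MvPolynomial (Fin m) ℝ} (hW : ∀ y, 0 ≤ eval y W) (P : MvPolynomial (Fin m) ℝ) :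
    MemLp (fun y => √(eval y W) * eval y P) 2 ν := by
  rw [memLp_two_iff_integrable_sq]
  · refine (hmom.integrable_eval (W * P ^ 2)).congr (ae_of_all _ fun y => ?_)
    simp [mul_pow, Real.sq_sqrt (hW y)]
  · exact ((MvPolynomial.continuous_eval W).sqrt.mul
      (MvPolynomial.continuous_eval P)).aestronglyMeasurable

/-- A function orthogonal to all polynomials, with a polynomial weight, has vanishing weighted
Fourier transform. -/
theorem Carleman.integral_mul_exp_eq_zero {m : ℕ} {ν : Measure (Fin m → ℝ)}
    (hmom : momentsFinite ν) (hcar : Carleman ν) {W : MvPolynomial (Fin m) ℝ}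
    (hW : ∀ y, 0 ≤ eval y W) {f : (Fin m → ℝ) → ℝ} (hf : MemLp f 2 ν)
    (horth : ∀ P : MvPolynomial (Fin m) ℝ, ∫ y, f y * (√(eval y W) * eval y P) ∂ν = 0)
    (s : Finset (Fin m)) (t : Fin m → ℝ) (P : MvPolynomial (Fin m) ℝ) :
    ∫ y, ((f y * (√(eval y W) * eval y P) : ℝ) : ℂ) *
      Complex.exp (Complex.I * (∑ j ∈ s, t j * y j : ℝ)) ∂ν = 0 := by
  have hPint : ∀ P : MvPolynomial (Fin m) ℝ,
      Integrable (fun y => f y * (√(eval y W) * eval y P)) ν := fun P =>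
    hf.integrable_mul (MvPolynomial.memLp_two_sqrt_mul hmom hW P)
  have hexpm : ∀ s : Finset (Fin m), AEStronglyMeasurable
      (fun y : Fin m → ℝ => Complex.exp (Complex.I * (∑ j ∈ s, t j * y j : ℝ))) ν := fun s => by
    refine Continuous.aestronglyMeasurable ?_
    fun_prop
  have hnorm : ∀ (r : ℝ), ‖Complex.exp (Complex.I * (r : ℂ))‖ = 1 := fun r => by
    rw [mul_comm]; exact Complex.norm_exp_ofReal_mul_I r
  induction s using Finset.induction_on generalizing P with
  | empty => 
    simp only [sum_empty, Complex.ofReal_zero, mul_zero, Complex.exp_zero, mul_one]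
    rw [integral_complex_ofReal, horth, Complex.ofReal_zero]
  | insert j s hj ih =>
    set E : (Fin m → ℝ) → ℂ := fun y => Complex.exp (Complex.I * (∑ j ∈ s, t j * y j : ℝ)) with hE
    set Φ : ℕ → ℝ → (Fin m → ℝ) → ℂ := fun k u y =>
      ((f y * (√(eval y W) * eval y (P * X j ^ k)) : ℝ) : ℂ) * E y *
        (Complex.I ^ k * Complex.exp (Complex.I * (u * y j : ℝ))) with hΦ
    have hmeas : ∀ k u, AEStronglyMeasurable (Φ k u) ν := fun k u => by
      refine (((hPint (P * X j ^ k)).ofReal (𝕜 := ℂ)).aestronglyMeasurable.mul (hexpm s)).mul ?_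
      refine Continuous.aestronglyMeasurable ?_
      fun_prop
    have hΦn : ∀ k u y, ‖Φ k u y‖ = ‖f y * (√(eval y W) * eval y (P * X j ^ k))‖ := by
      intro k u y
      simp only [hΦ, hE, norm_mul, hnorm, norm_pow, Complex.norm_I, one_pow, mul_one,
        Complex.norm_real]
    have hΦint : ∀ k u, Integrable (Φ k u) ν := fun k u =>
      (hPint (P * X j ^ k)).mono (hmeas k u) (ae_of_all _ fun y => (hΦn k u y).le)
    have hderiv : ∀ k u, HasDerivAt (fun u => ∫ y, Φ k u y ∂ν) (∫ y, Φ (k + 1) u y ∂ν) u := by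
      intro k u
      refine (hasDerivAt_integral_of_dominated_loc_of_deriv_le (s := Set.univ) Filter.univ_mem
        (bound := fun y => ‖f y * (√(eval y W) * eval y (P * X j ^ (k + 1)))‖)
        (Filter.Eventually.of_forall fun u => hmeas k u) (hΦint k u) (hmeas (k + 1) u)
        (ae_of_all _ fun y u _ => (hΦn (k + 1) u y).le) (hPint _).norm
        (ae_of_all _ fun y u _ => ?_)).2
      have h1 : HasDerivAt (fun u : ℝ => Complex.I * ((u * y j : ℝ) : ℂ)) (Complex.I * y j) u := by
        have := ((hasDerivAt_id u).mul_const (y j)).ofReal_comp.const_mul Complex.I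
        simpa using this
      have h2 := (h1.cexp.const_mul (Complex.I ^ k)).const_mul
        (((f y * (√(eval y W) * eval y (P * X j ^ k)) : ℝ) : ℂ) * E y)
      refine h2.congr_deriv ?_
      simp only [hΦ, map_mul, map_pow, eval_X]
      push_cast
      ring
    have h0 : ∀ k, ∫ y, Φ k 0 y ∂ν = 0 := fun k => by
      have : ∀ y, Φ k 0 y = ((f y * (√(eval y W) * eval y (P * X j ^ k)) : ℝ) : ℂ) * E y *
          Complex.I ^ k := fun y => by simp [hΦ]
      simp only [this]
      rw [integral_mul_const, ih (P * X j ^ k), zero_mul]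
    set A : ℝ := (∫ y, f y ^ 2 ∂ν) ^ 2 * ∫ y, eval y (W * P ^ 2) ^ 2 ∂ν with hA
    have hA0 : 0 ≤ A := mul_nonneg (sq_nonneg _) (integral_nonneg fun y => sq_nonneg _)
    have hbound : ∀ k u, ‖∫ y, Φ k u y ∂ν‖ ≤
        (1 + A) * (∫ y, y j ^ (2 * (2 * k)) ∂ν) ^ ((1 : ℝ) / 4) := by
      intro k u
      set J := ∫ y, |f y| * |√(eval y W) * eval y (P * X j ^ k)| ∂ν with hJ
      set mk := ∫ y, y j ^ (2 * (2 * k)) ∂ν with hmk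
      have hmk0 : 0 ≤ mk := (hcar.moment_pos hmom j _).le
      have hJ0 : 0 ≤ J := integral_nonneg fun y => by positivity
      have h1 : ‖∫ y, Φ k u y ∂ν‖ ≤ J := by
        refine (norm_integral_le_integral_norm _).trans (le_of_eq ?_)
        simp only [hΦn, hJ, Real.norm_eq_abs, abs_mul]
      have h2 : J ^ 2 ≤ (∫ y, f y ^ 2 ∂ν) * ∫ y, eval y (W * P ^ 2) * y j ^ (2 * k) ∂ν := by
        have hm2 := MvPolynomial.memLp_two_sqrt_mul hmom hW (P * X j ^ k)
        have := integral_mul_sq_le (μ := ν) (f := fun y => |f y|)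
          (g := fun y => |√(eval y W) * eval y (P * X j ^ k)|)
          (by simpa only [sq_abs] using hf.integrable_sq)
          (by simpa only [sq_abs] using hm2.integrable_sq)
          (by simpa only [abs_mul] using (hPint (P * X j ^ k)).abs)
        simp only [sq_abs] at this
        refine this.trans (le_of_eq ?_)
        congr 2; ext y
        simp only [mul_pow, Real.sq_sqrt (hW y), map_mul, map_pow, eval_X]
        ring
      have h3 : (∫ y, eval y (W * P ^ 2) * y j ^ (2 * k) ∂ν) ^ 2 ≤
          (∫ y, eval y (W * P ^ 2) ^ 2 ∂ν) * mk := by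
        have := integral_mul_sq_le (μ := ν) (f := fun y => eval y (W * P ^ 2))
          (g := fun y => y j ^ (2 * k))
          ((hmom.integrable_eval ((W * P ^ 2) ^ 2)).congr (ae_of_all _ fun y => by simp))
          (by simpa only [← pow_mul] using hmom.integrable_pow j (2 * k * 2))
          ((hmom.integrable_eval (W * P ^ 2 * X j ^ (2 * k))).congr
            (ae_of_all _ fun y => by simp))
        rwa [hmk, show 2 * (2 * k) = 2 * k * 2 by ring, ← integral_congr_ae
          (ae_of_all ν fun y => (pow_mul (y j) (2 * k) 2).symm)]
      have h4 : J ^ 4 ≤ A * mk := by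
        calc J ^ 4 = (J ^ 2) ^ 2 := by ring
          _ ≤ ((∫ y, f y ^ 2 ∂ν) * ∫ y, eval y (W * P ^ 2) * y j ^ (2 * k) ∂ν) ^ 2 := by gcongr
          _ = (∫ y, f y ^ 2 ∂ν) ^ 2 * (∫ y, eval y (W * P ^ 2) * y j ^ (2 * k) ∂ν) ^ 2 := by ring
          _ ≤ (∫ y, f y ^ 2 ∂ν) ^ 2 * ((∫ y, eval y (W * P ^ 2) ^ 2 ∂ν) * mk) := by gcongr
          _ = A * mk := by rw [hA]; ring
      refine h1.trans ((pow_le_pow_iff_left₀ hJ0 (by positivity) (four_ne_zero)).1 ?_)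
      have h5 : (mk ^ ((1 : ℝ) / 4)) ^ 4 = mk := by
        rw [one_div]; exact_mod_cast Real.rpow_inv_natCast_pow hmk0 (by norm_num : (4 : ℕ) ≠ 0)
      rw [mul_pow, h5]
      refine h4.trans ?_
      gcongr
      nlinarith [mul_nonneg hA0 hA0, mul_nonneg hA0 (mul_nonneg hA0 hA0), sq_nonneg (A * A)]
    have := hcar.eq_zero hmom j hderiv (by positivity : (0 : ℝ) < 1 + A) hbound h0 (t j)
    rw [← this]
    congr 1; ext y
    simp only [hΦ, hE, pow_zero, mul_one, one_mul]
    rw [mul_assoc, ← Complex.exp_add, Finset.sum_insert hj]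
    congr 2
    push_cast
    ring

/-- Weighted polynomials separate `L²` functions. -/
theorem Carleman.ae_eq_zero_of_orthogonal {m : ℕ} {ν : Measure (Fin m → ℝ)}
    (hmom : momentsFinite ν) (hcar : Carleman ν) {W : MvPolynomial (Fin m) ℝ}
    (hW : ∀ y, 0 < eval y W) {f : (Fin m → ℝ) → ℝ} (hf : MemLp f 2 ν)
    (horth : ∀ P : MvPolynomial (Fin m) ℝ, ∫ y, f y * (√(eval y W) * eval y P) ∂ν = 0) :
    f =ᵐ[ν] 0 := by
  have := hmom.isFiniteMeasure
  set u : (Fin m → ℝ) → ℝ := fun y => f y * √(eval y W) with hu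
  have hui : Integrable u ν := by
    simpa [hu, Pi.mul_def] using hf.integrable_mul
      (MvPolynomial.memLp_two_sqrt_mul hmom (fun y => (hW y).le) 1)
  have hfour : ∀ t : Fin m → ℝ, ∫ y, ((u y : ℝ) : ℂ) *
      Complex.exp (Complex.I * (∑ j, t j * y j : ℝ)) ∂ν = 0 := fun t => by
    simpa [hu] using hcar.integral_mul_exp_eq_zero hmom (fun y => (hW y).le) hf horth univ t 1
  have hm1 : AEMeasurable (fun y => ENNReal.ofReal (u y)) ν := hui.aemeasurable.ennreal_ofReal
  have hm2 : AEMeasurable (fun y => ENNReal.ofReal (-u y)) ν :=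
    hui.neg.aemeasurable.ennreal_ofReal
  have hl1 : ∫⁻ y, ENNReal.ofReal (u y) ∂ν ≠ ⊤ := hui.lintegral_lt_top.ne
  have hl2 : ∫⁻ y, ENNReal.ofReal (-u y) ∂ν ≠ ⊤ := hui.neg.lintegral_lt_top.ne
  have hfin1 := isFiniteMeasure_withDensity hl1
  have hfin2 := isFiniteMeasure_withDensity hl2
  have heq : ν.withDensity (fun y => ENNReal.ofReal (u y)) =
      ν.withDensity (fun y => ENNReal.ofReal (-u y)) := by
    refine Measure.ext_of_charFunDual (funext fun ℓ => ?_)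
    rw [charFunDual_apply, charFunDual_apply,
      integral_withDensity_eq_integral_toReal_smul₀ hm1 (ae_of_all _ fun y => ENNReal.ofReal_lt_top),
      integral_withDensity_eq_integral_toReal_smul₀ hm2 (ae_of_all _ fun y => ENNReal.ofReal_lt_top),
      ← sub_eq_zero]
    have hexp : ∀ v : (Fin m → ℝ) → ℝ, Integrable v ν → Integrable (fun y =>
        (ENNReal.ofReal (v y)).toReal • Complex.exp (ℓ y * Complex.I)) ν := fun v hv => by
      refine hv.mono ?_ (ae_of_all _ fun y => ?_)
      · exact (hv.aemeasurable.ennreal_ofReal.ennreal_toReal.aestronglyMeasurable).smul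
          (Continuous.aestronglyMeasurable (by fun_prop))
      · rw [norm_smul, Complex.norm_exp_ofReal_mul_I, mul_one, ENNReal.toReal_ofReal',
          Real.norm_eq_abs, Real.norm_eq_abs, abs_of_nonneg (le_max_right _ _)]
        exact max_le (le_abs_self _) (abs_nonneg _)
    rw [← integral_sub (hexp u hui) (hexp (fun y => -u y) hui.neg), ← hfour fun j => ℓ (Pi.single j 1)]
    congr 1; ext y
    rw [← sub_smul, ENNReal.toReal_ofReal', ENNReal.toReal_ofReal']
    have h1 : max (u y) 0 - max (-u y) 0 = u y := by
      rcases le_total 0 (u y) with h | h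
      · rw [max_eq_left h, max_eq_right (by linarith)]; ring
      · rw [max_eq_right h, max_eq_left (by linarith)]; ring
    have h2 : ℓ y = ∑ j, ℓ (Pi.single j 1) * y j := by
      conv_lhs => rw [← ContinuousLinearMap.coe_coe, LinearMap.pi_apply_eq_sum_univ]
      refine sum_congr rfl fun j _ => ?_
      rw [smul_eq_mul, mul_comm, ContinuousLinearMap.coe_coe]
      congr 2; ext i; simp [Pi.single_apply, eq_comm]
    rw [h1, h2, Complex.real_smul, mul_comm Complex.I]
  have hae := (withDensity_eq_iff hm1 hm2 hl1).1 heq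
  filter_upwards [hae] with y hy
  have hu0 : u y = 0 := by
    rcases lt_trichotomy (u y) 0 with h | h | h
    · rw [ENNReal.ofReal_of_nonpos h.le, eq_comm, ENNReal.ofReal_eq_zero] at hy; linarith
    · exact h
    · rw [ENNReal.ofReal_of_nonpos (by linarith : -u y ≤ 0), ENNReal.ofReal_eq_zero] at hy; linarith
  exact (mul_eq_zero.1 hu0).resolve_right (Real.sqrt_pos.2 (hW y)).ne'

/-- If a polynomial `g` is negative somewhere on the support of a measure satisfying the Carleman
condition, then it is negative against some square. -/
theorem Carleman.exists_integral_sq_mul_neg {m : ℕ} {Y : Set (Fin m → ℝ)}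
    {ν : Measure (Fin m → ℝ)} (hsupp : hasSupport ν Y) (hmom : momentsFinite ν)
    (hcar : Carleman ν) (g : MvPolynomial (Fin m) ℝ) {y₀ : Fin m → ℝ} (hy₀ : y₀ ∈ Y)
    (hg : eval y₀ g < 0) : ∃ h : MvPolynomial (Fin m) ℝ, ∫ y, eval y h ^ 2 * eval y g ∂ν < 0 := by
  have := hmom.isFiniteMeasure
  set W : MvPolynomial (Fin m) ℝ := 1 + g ^ 2 with hWdef
  have hWe : ∀ y, eval y W = 1 + eval y g ^ 2 := fun y => by simp [hWdef]
  have hW : ∀ y, 0 < eval y W := fun y => by rw [hWe]; positivity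
  have hP := fun P => MvPolynomial.memLp_two_sqrt_mul hmom (fun y => (hW y).le) P
  let lin : MvPolynomial (Fin m) ℝ →ₗ[ℝ] Lp ℝ 2 ν :=
    { toFun := fun P => (hP P).toLp _
      map_add' := fun P Q => by
        rw [← MemLp.toLp_add]
        exact MemLp.toLp_congr _ _ (ae_of_all _ fun y => by simp [mul_add])
      map_smul' := fun c P => by
        rw [RingHom.id_apply, ← MemLp.toLp_const_smul]
        exact MemLp.toLp_congr _ _ (ae_of_all _ fun y => by simp; ring) }
  have hdense : (LinearMap.range lin).topologicalClosure = ⊤ := by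
    rw [Submodule.topologicalClosure_eq_top_iff, Submodule.eq_bot_iff]
    intro f hf
    rw [Submodule.mem_orthogonal] at hf
    have h1 : f =ᵐ[ν] 0 := by
      refine hcar.ae_eq_zero_of_orthogonal hmom hW (Lp.memLp f) fun P => ?_
      have h2 := hf (lin P) ⟨P, rfl⟩
      rw [L2.inner_def] at h2
      rw [← h2]
      refine integral_congr_ae ?_
      filter_upwards [(hP P).coeFn_toLp] with y hy
      change _ = inner ℝ (((hP P).toLp _ : Lp ℝ 2 ν) y) (f y)
      rw [hy]; simp
    exact (Lp.eq_zero_iff_ae_eq_zero).2 h1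
  set U : Set (Fin m → ℝ) := {y | eval y g < 0} with hU
  have hUo : IsOpen U := isOpen_lt (MvPolynomial.continuous_eval g) continuous_const
  set ψ : (Fin m → ℝ) → ℝ := U.indicator fun y => √(eval y W) with hψ
  have hψL : MemLp ψ 2 ν := by
    have := (hP 1).indicator hUo.measurableSet
    simpa [hψ] using this
  have hψsq : ∀ y, ψ y ^ 2 * (eval y g / eval y W) = U.indicator (fun y => eval y g) y := by
    intro y
    by_cases hy : y ∈ U
    · rw [hψ, Set.indicator_of_mem hy, Set.indicator_of_mem hy, Real.sq_sqrt (hW y).le]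
      have := (hW y).ne'
      field_simp
    · simp [hψ, Set.indicator_of_notMem hy]
  have hgint := hmom.integrable_eval g
  set κ : ℝ := ∫ y, U.indicator (fun y => eval y g) y ∂ν with hκ
  have hκneg : κ < 0 := by
    have hpos := hsupp.2 U hUo ⟨y₀, hg, hy₀⟩
    rw [hκ, integral_indicator hUo.measurableSet, ← neg_pos, ← integral_neg]
    rw [integral_pos_iff_support_of_nonneg_ae]
    · refine lt_of_lt_of_le hpos ?_
      rw [Measure.restrict_apply' hUo.measurableSet]
      refine measure_mono fun y hy => ⟨?_, hy⟩
      exact (neg_pos.2 hy).ne'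
    · filter_upwards [ae_restrict_mem hUo.measurableSet] with y hy
      exact (neg_pos.2 hy).le
    · exact hgint.neg.integrableOn
  set B : ℝ := ∫ y, ψ y ^ 2 ∂ν with hB
  have hB0 : 0 ≤ B := integral_nonneg fun y => sq_nonneg _
  set ε : ℝ := -κ / (2 * (B + 1)) with hε
  have hε0 : 0 < ε := div_pos (by linarith) (by positivity)
  have hεB : ε * B ≤ -κ / 2 := by
    rw [hε, div_mul_eq_mul_div, div_le_div_iff₀ (by positivity) (by norm_num)]
    nlinarith
  set c : ℝ := 1 + ε⁻¹ with hc
  have hc0 : 0 < c := by positivity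
  obtain ⟨δ, hδ0, hδ⟩ : ∃ δ : ℝ, 0 < δ ∧ c * δ ^ 2 < -κ / 2 := by
    refine ⟨√(-κ / (4 * c)), Real.sqrt_pos.2 (div_pos (by linarith) (by positivity)), ?_⟩
    rw [Real.sq_sqrt (div_nonneg (by linarith) (by positivity))]
    have : c * (-κ / (4 * c)) = -κ / 4 := by field_simp
    linarith
  have hmem : hψL.toLp ψ ∈ (LinearMap.range lin).topologicalClosure := hdense ▸ Submodule.mem_top
  rw [← SetLike.mem_coe, Submodule.topologicalClosure_coe, Metric.mem_closure_iff] at hmem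
  obtain ⟨_, ⟨h, rfl⟩, hdist⟩ := hmem δ hδ0
  refine ⟨h, ?_⟩
  have hsub : MemLp (fun y => ψ y - √(eval y W) * eval y h) 2 ν := hψL.sub (hP h)
  have hD : ∫ y, (ψ y - √(eval y W) * eval y h) ^ 2 ∂ν < δ ^ 2 := by
    have h1 : ‖hsub.toLp _‖ < δ := by
      rw [dist_eq_norm] at hdist
      exact hdist
    have h2 : ‖hsub.toLp _‖ ^ 2 = ∫ y, (ψ y - √(eval y W) * eval y h) ^ 2 ∂ν := by
      rw [← real_inner_self_eq_norm_sq, L2.inner_def]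
      refine integral_congr_ae ?_
      filter_upwards [hsub.coeFn_toLp] with y hy
      rw [hy]; simp [sq]
    rw [← h2]
    exact pow_lt_pow_left₀ h1 (norm_nonneg _) two_ne_zero
  have hpt : ∀ y, eval y h ^ 2 * eval y g ≤ U.indicator (fun y => eval y g) y + ε * ψ y ^ 2 +
      c * (ψ y - √(eval y W) * eval y h) ^ 2 := by
    intro y
    set a := √(eval y W) * eval y h with ha
    set w := eval y g / eval y W with hw
    have hw1 : |w| ≤ 1 := by
      rw [hw, abs_div, abs_of_pos (hW y), div_le_one (hW y), hWe]
      nlinarith [sq_nonneg (|eval y g| - 1), sq_abs (eval y g), abs_nonneg (eval y g)]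
    have e1 : eval y h ^ 2 * eval y g = a ^ 2 * w := by
      rw [ha, hw, mul_pow, Real.sq_sqrt (hW y).le]
      have := (hW y).ne'
      field_simp
    rw [e1, ← hψsq y]
    set b := ψ y
    have h1 : (a ^ 2 - b ^ 2) * w ≤ |a ^ 2 - b ^ 2| := by
      calc _ ≤ |(a ^ 2 - b ^ 2) * w| := le_abs_self _
        _ = |a ^ 2 - b ^ 2| * |w| := abs_mul _ _
        _ ≤ _ := mul_le_of_le_one_right (abs_nonneg _) hw1
    have hq : ∀ s : ℝ, s ^ 2 = 1 → 0 ≤ ε * b ^ 2 + ε⁻¹ * (b - a) ^ 2 - 2 * s * (b * (b - a)) := by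
      intro s hs
      have : ε * b ^ 2 + ε⁻¹ * (b - a) ^ 2 - 2 * s * (b * (b - a)) =
          ε * (b - s * ε⁻¹ * (b - a)) ^ 2 := by
        have h3 : ε * (b - s * ε⁻¹ * (b - a)) ^ 2 = ε * b ^ 2 - 2 * s * (ε * ε⁻¹) * (b * (b - a)) +
          s ^ 2 * (ε * ε⁻¹) * ε⁻¹ * (b - a) ^ 2 := by ring
        rw [h3, hs, mul_inv_cancel₀ hε0.ne']; ring
      rw [this]; positivity
    have h2 : |a ^ 2 - b ^ 2| ≤ ε * b ^ 2 + c * (b - a) ^ 2 := by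
      rw [hc, abs_le]
      constructor <;> nlinarith [hq 1 (by norm_num), hq (-1) (by norm_num), sq_nonneg (b - a)]
    nlinarith
  have hi1 : Integrable (fun y => U.indicator (fun y => eval y g) y) ν :=
    hgint.indicator hUo.measurableSet
  have hi2 : Integrable (fun y => ε * ψ y ^ 2) ν := hψL.integrable_sq.const_mul ε
  have hi3 : Integrable (fun y => c * (ψ y - √(eval y W) * eval y h) ^ 2) ν :=
    hsub.integrable_sq.const_mul c
  have hi12 : Integrable (fun y => U.indicator (fun y => eval y g) y + ε * ψ y ^ 2) ν :=
    hi1.add hi2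
  have hi0 : Integrable (fun y => eval y h ^ 2 * eval y g) ν :=
    (hmom.integrable_eval (h ^ 2 * g)).congr (ae_of_all _ fun y => by simp)
  have hfin := integral_mono hi0 (hi12.add hi3) hpt
  have hsum : ∫ y, ((U.indicator (fun y => eval y g) y + ε * ψ y ^ 2) +
      c * (ψ y - √(eval y W) * eval y h) ^ 2) ∂ν =
      κ + ε * B + c * ∫ y, (ψ y - √(eval y W) * eval y h) ^ 2 ∂ν := by
    rw [integral_add hi12 hi3, integral_add hi1 hi2, integral_const_mul, integral_const_mul]
  have hfin' := hfin.trans_eq hsum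
  have := mul_lt_mul_of_pos_left hD hc0
  linarith

/-- The falling factorial as a product over the reals. -/
theorem Nat.cast_descFactorial_eq_prod (b a : ℕ) :
    ((b.descFactorial a : ℕ) : ℝ) = ∏ l ∈ range a, ((b : ℝ) - l) := by
  induction a with
  | zero => simp
  | succ a ih =>
    rw [Nat.descFactorial_succ, prod_range_succ, ← ih, Nat.cast_mul, mul_comm]
    rcases le_or_gt a b with h | h
    · rw [Nat.cast_sub h]
    · rw [Nat.descFactorial_eq_zero_iff_lt.2 h]; simp

theorem MvPolynomial.IsHomogeneous.sum_eq {K : Type*} [Fintype K] {d : ℕ}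
    {Q : MvPolynomial K ℝ} (hQ : Q.IsHomogeneous d) {α : K →₀ ℕ} (hα : α ∈ Q.support) :
    ∑ k, α k = d := by
  have := hQ (mem_support_iff.1 hα)
  rwa [Finsupp.weight_apply, Finsupp.sum_fintype _ _ (by simp),
    sum_congr rfl fun i _ => show α i • (1 : K → ℕ) i = α i by simp] at this

/-- The coefficients of a form multiplied by a power of the sum of the variables. -/
theorem MvPolynomial.coeff_sum_X_pow_mul {K : Type*} [Fintype K] {d : ℕ}
    {Q : MvPolynomial K ℝ} (hQ : Q.IsHomogeneous d) (N : ℕ) (β : K →₀ ℕ)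
    (hβ : ∑ k, β k = N + d) :
    coeff β ((∑ k, X k) ^ N * Q) * ∏ k, ((β k).factorial : ℝ) =
      N.factorial * ∑ α ∈ Q.support, coeff α Q * ∏ k, ∏ l ∈ range (α k), ((β k : ℝ) - l) := by
  classical
  conv_lhs => rw [Q.as_sum, mul_sum, coeff_sum, sum_mul]
  rw [mul_sum]
  refine sum_congr rfl fun α hα => ?_
  have hαd : ∑ k, α k = d := hQ.sum_eq hα
  rw [coeff_mul_monomial']
  simp only [← Nat.cast_descFactorial_eq_prod]
  split_ifs with hle
  · have hsum : (β - α).sum (fun _ m => m) = N := by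
      rw [Finsupp.sum_fintype _ _ (by simp)]
      have : ∑ k, (β - α) k + ∑ k, α k = ∑ k, β k := by
        rw [← sum_add_distrib]
        exact sum_congr rfl fun k _ => by
          rw [Finsupp.coe_tsub, Pi.sub_apply]; exact Nat.sub_add_cancel (hle k)
      omega
    have hmul : (∏ k, ((β - α) k).factorial) * (β - α).multinomial = N.factorial := by
      rw [← Finsupp.multinomial_of_support_subset (subset_univ _), Nat.multinomial_spec, ← hsum,
        Finsupp.sum_fintype _ _ (by simp)]
    rw [coeff_sum_X_pow_of_fintype, if_pos hsum, ← hmul]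
    have : ∀ k, ((β k).factorial : ℝ) =
        ((β - α) k).factorial * (β k).descFactorial (α k) := fun k => by
      rw [← Nat.factorial_mul_descFactorial (hle k)]; push_cast; rfl
    simp only [this, prod_mul_distrib]
    push_cast
    ring
  · obtain ⟨k, hk⟩ : ∃ k, β k < α k := by
      by_contra! h; exact hle h
    have : ∏ k, ((β k).descFactorial (α k) : ℝ) = 0 :=
      prod_eq_zero (mem_univ k) (by rw [Nat.descFactorial_eq_zero_iff_lt.2 hk]; simp)
    rw [this]
    simp

/-- A matrix version of Pólya's theorem: if a symmetric matrix form is positive definite on the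
simplex, then after multiplication by a large power of the sum of the variables all coefficient
matrices are positive semidefinite. -/
theorem MvPolynomial.exists_polya {K ι : Type*} [Fintype K] [Fintype ι] {d : ℕ}
    {P : ι → ι → MvPolynomial K ℝ} (hP : ∀ i j, (P i j).IsHomogeneous d)
    (hpos : ∀ z : K → ℝ, (∀ k, 0 ≤ z k) → ∑ k, z k = 1 → ∀ w : ι → ℝ, ‖w‖ = 1 →
      0 < ∑ i, ∑ j, w i * w j * eval z (P i j)) :
    ∃ N₀ : ℕ, ∀ N ≥ N₀, ∀ β : K →₀ ℕ, ∀ w : ι → ℝ,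
      0 ≤ ∑ i, ∑ j, w i * w j * coeff β ((∑ k, X k) ^ N * P i j) := by
  classical
  set Ψ : ℝ → (K → ℝ) × (ι → ℝ) → ℝ := fun t z => ∑ i, ∑ j, z.2 i * z.2 j *
    ∑ α ∈ (P i j).support, coeff α (P i j) * ∏ k, ∏ l ∈ range (α k), (z.1 k - l * t) with hΨ
  have hΨc : Continuous (Function.uncurry Ψ) := by
    simp only [hΨ, Function.uncurry_def]
    fun_prop
  set Δ : Set ((K → ℝ) × (ι → ℝ)) := stdSimplex ℝ K ×ˢ Metric.sphere 0 1 with hΔ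
  have hΔc : IsCompact Δ := (isCompact_stdSimplex ℝ K).prod (isCompact_sphere _ _)
  have h0 : ∀ z ∈ Δ, 0 < Ψ 0 z := by
    rintro ⟨z, w⟩ ⟨⟨hz0, hz1⟩, hw⟩
    have := hpos z hz0 hz1 w (mem_sphere_zero_iff_norm.1 hw)
    simp only [hΨ]
    convert this using 6 with i _ j _
    rw [eval_eq']
    simp
  have hev : ∀ᶠ t in nhds (0 : ℝ), ∀ z ∈ Δ, 0 < Ψ t z := by
    refine hΔc.eventually_forall_of_forall_eventually fun z hz => ?_
    exact (hΨc.tendsto (0, z)).eventually (lt_mem_nhds (h0 z hz))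
  have hlim : Filter.Tendsto (fun N : ℕ => 1 / ((N : ℝ) + 1)) Filter.atTop (nhds 0) :=
    tendsto_one_div_add_atTop_nhds_zero_nat
  obtain ⟨N₀, hN₀⟩ := Filter.eventually_atTop.1 (hlim.eventually hev)
  refine ⟨N₀ + 1, fun N hN β w => ?_⟩
  rcases eq_or_ne w 0 with rfl | hw
  · simp
  by_cases hβ : ∑ k, β k = N + d
  swap
  · refine le_of_eq (Eq.symm (sum_eq_zero fun i _ => sum_eq_zero fun j _ => ?_))
    have hh : ((∑ k, X k : MvPolynomial K ℝ) ^ N * P i j).IsHomogeneous (1 * N + d) :=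
      ((IsHomogeneous.sum _ _ _ fun k _ => isHomogeneous_X ℝ k).pow N).mul (hP i j)
    rw [hh.coeff_eq_zero, mul_zero]
    rw [one_mul]
    rwa [Finsupp.degree_eq_sum]
  have hfac : 0 < ∏ k, ((β k).factorial : ℝ) :=
    prod_pos fun k _ => by exact_mod_cast (β k).factorial_pos
  refine nonneg_of_mul_nonneg_left ?_ hfac
  have hNd : (0 : ℝ) < N + d := by
    have : 0 < N := by omega
    positivity
  set t : ℝ := 1 / (N + d) with ht
  have ht0 : 0 < t := by positivity
  set z : K → ℝ := fun k => β k * t with hz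
  have hw1 : 0 < ‖w‖ := norm_pos_iff.2 hw
  have hmem : (z, ‖w‖⁻¹ • w) ∈ Δ := by
    refine ⟨⟨fun k => by positivity, ?_⟩, ?_⟩
    · simp only [hz]
      rw [← sum_mul, ← Nat.cast_sum, hβ, ht]
      push_cast
      field_simp
    · rw [mem_sphere_zero_iff_norm, norm_smul, norm_inv, norm_norm, inv_mul_cancel₀ hw1.ne']
  have hpos' : 0 < Ψ t (z, ‖w‖⁻¹ • w) := by
    have := hN₀ (N - 1 + d) (by omega)
    have hcast : ((N - 1 + d : ℕ) : ℝ) + 1 = N + d := by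
      have : N - 1 + d + 1 = N + d := by omega
      exact_mod_cast this
    rw [hcast] at this
    exact this _ hmem
  have hscale : ∀ i j, ∀ α ∈ (P i j).support,
      ∏ k, ∏ l ∈ range (α k), ((β k : ℝ) - l) =
        (N + d : ℝ) ^ d * ∏ k, ∏ l ∈ range (α k), (z k - l * t) := by
    intro i j α hα
    have hpow : (N + d : ℝ) ^ d = ∏ k, ∏ _l ∈ range (α k), (N + d : ℝ) := by
      simp only [prod_const, card_range]
      rw [prod_pow_eq_pow_sum, (hP i j).sum_eq hα]
    rw [hpow, ← prod_mul_distrib]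
    refine prod_congr rfl fun k _ => ?_
    rw [← prod_mul_distrib]
    refine prod_congr rfl fun l _ => ?_
    rw [hz, ht]
    field_simp
  have hid : (∑ i, ∑ j, w i * w j * coeff β ((∑ k, X k) ^ N * P i j)) *
      ∏ k, ((β k).factorial : ℝ) =
      N.factorial * (N + d : ℝ) ^ d * ‖w‖ ^ 2 * Ψ t (z, ‖w‖⁻¹ • w) := by
    simp only [hΨ, sum_mul, mul_sum, Pi.smul_apply, smul_eq_mul]
    refine sum_congr rfl fun i _ => sum_congr rfl fun j _ => ?_
    rw [mul_assoc, coeff_sum_X_pow_mul (hP i j) N β hβ, mul_sum, mul_sum]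
    refine sum_congr rfl fun α hα => ?_
    rw [hscale i j α hα]
    generalize ∏ k, ∏ l ∈ range (α k), (z k - l * t) = D
    field_simp
  rw [hid]
  positivity

/-- Gram matrices with arbitrary finite row index are SOS matrices. -/
theorem isSOSMatrix_transpose_mul_self {σ ι κ : Type*} [Fintype ι] [Fintype κ]
    (T : Matrix κ ι (MvPolynomial σ ℝ)) : IsSOSMatrix (Tᵀ * T) := by
  refine ⟨Fintype.card κ, T.submatrix (Fintype.equivFin κ).symm id, ?_⟩
  rw [transpose_submatrix, submatrix_mul_equiv, submatrix_id_id]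

theorem isSOSMatrix_zero {σ ι : Type*} [Fintype ι] :
    IsSOSMatrix (0 : Matrix ι ι (MvPolynomial σ ℝ)) :=
  ⟨0, 0, by simp⟩

theorem IsSOSMatrix.add {σ ι : Type*} [Fintype ι] {A B : Matrix ι ι (MvPolynomial σ ℝ)}
    (hA : IsSOSMatrix A) (hB : IsSOSMatrix B) : IsSOSMatrix (A + B) := by
  obtain ⟨k, S, rfl⟩ := hA
  obtain ⟨l, T, rfl⟩ := hB
  have := isSOSMatrix_transpose_mul_self (fromRows S T)
  rwa [transpose_fromRows, fromCols_mul_fromRows] at this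

theorem IsSOSMatrix.sum {σ ι κ : Type*} [Fintype ι] {s : Finset κ}
    {A : κ → Matrix ι ι (MvPolynomial σ ℝ)} (hA : ∀ k ∈ s, IsSOSMatrix (A k)) :
    IsSOSMatrix (∑ k ∈ s, A k) :=
  Finset.sum_induction _ _ (fun _ _ => IsSOSMatrix.add) isSOSMatrix_zero hA

theorem IsSOSMatrix.sq_smul {σ ι : Type*} [Fintype ι] {A : Matrix ι ι (MvPolynomial σ ℝ)}
    (hA : IsSOSMatrix A) (g : MvPolynomial σ ℝ) : IsSOSMatrix (g ^ 2 • A) := by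
  obtain ⟨k, S, rfl⟩ := hA
  refine ⟨k, g • S, ?_⟩
  rw [transpose_smul, smul_mul, Matrix.mul_smul, smul_smul, sq]

/-- A real symmetric matrix with nonnegative quadratic form is a constant SOS matrix. -/
theorem isSOSMatrix_map_C {σ ι : Type*} [Fintype ι] {A : Matrix ι ι ℝ} (hA : A.IsSymm)
    (hpos : ∀ w : ι → ℝ, 0 ≤ ∑ i, ∑ j, w i * w j * A i j) :
    IsSOSMatrix (A.map (C : ℝ → MvPolynomial σ ℝ)) := by
  classical
  have hpsd : A.PosSemidef := by
    refine Matrix.PosSemidef.of_dotProduct_mulVec_nonneg ?_ fun w => ?_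
    · rw [IsHermitian, conjTranspose_eq_transpose_of_trivial]
      exact hA
    · have : star w ⬝ᵥ (A *ᵥ w) = ∑ i, ∑ j, w i * w j * A i j := by
        simp only [dotProduct, mulVec, mul_sum, star_trivial]
        exact sum_congr rfl fun i _ => sum_congr rfl fun j _ => by ring
      exact this ▸ hpos w
  obtain ⟨B, hB⟩ : ∃ B : Matrix ι ι ℝ, A = Bᵀ * B := by
    open scoped MatrixOrder Matrix.Norms.L2Operator in
    obtain ⟨B, hB⟩ := CStarAlgebra.nonneg_iff_eq_star_mul_self.1 hpsd.nonneg
    exact ⟨B, by simpa [star_eq_conjTranspose] using hB⟩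
  have := isSOSMatrix_transpose_mul_self (σ := σ) (B.map C)
  rwa [← transpose_map, ← Matrix.map_mul, ← hB] at this

/-- Substituting squares into a form with positive semidefinite coefficient matrices gives an SOS
matrix. -/
theorem isSOSMatrix_aeval_sq {σ ι K : Type*} [Fintype ι] [Fintype K]
    {R : ι → ι → MvPolynomial K ℝ} (hR : ∀ i j, R i j = R j i)
    (hpos : ∀ β : K →₀ ℕ, ∀ w : ι → ℝ, 0 ≤ ∑ i, ∑ j, w i * w j * coeff β (R i j))
    (ℓ : K → MvPolynomial σ ℝ) :
    IsSOSMatrix (Matrix.of fun i j => aeval (fun k => ℓ k ^ 2) (R i j)) := by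
  classical
  set S : Finset (K →₀ ℕ) := univ.biUnion fun i => univ.biUnion fun j => (R i j).support with hS
  have hsub : ∀ i j, (R i j).support ⊆ S := fun i j β hβ => by
    simp only [hS, mem_biUnion, mem_univ, true_and]
    exact ⟨i, j, hβ⟩
  have heq : (Matrix.of fun i j => aeval (fun k => ℓ k ^ 2) (R i j)) =
      ∑ β ∈ S, (∏ k, ℓ k ^ β k) ^ 2 • (Matrix.of fun i j => coeff β (R i j)).map C := by
    ext1 i j
    rw [Matrix.sum_apply]
    simp only [of_apply, Matrix.smul_apply, Matrix.map_apply, smul_eq_mul]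
    rw [aeval_eq_eval₂Hom, coe_eval₂Hom, eval₂_eq']
    refine (sum_subset (hsub i j) fun β _ hβ => ?_).trans (sum_congr rfl fun β _ => ?_)
    · rw [notMem_support_iff.1 hβ, map_zero, zero_mul]
    · rw [mul_comm, ← prod_pow]
      congr 1
      exact prod_congr rfl fun k _ => pow_right_comm _ _ _
  rw [heq]
  refine IsSOSMatrix.sum fun β _ => IsSOSMatrix.sq_smul (isSOSMatrix_map_C ?_ (hpos β)) _
  exact Matrix.ext fun i j => congrArg (coeff β) (hR j i)

/-- On a compact set, a continuous function that is positive on the zero set of a nonnegative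
continuous function becomes positive after adding a large multiple of the latter. -/
theorem IsCompact.exists_forall_pos_add_mul {α : Type*} [TopologicalSpace α] {S : Set α}
    (hS : IsCompact S) {f g : α → ℝ} (hf : Continuous f) (hg : Continuous g)
    (hg0 : ∀ a, 0 ≤ g a) (hfg : ∀ a ∈ S, g a = 0 → 0 < f a) :
    ∃ c : ℕ, ∀ a ∈ S, 0 < f a + c * g a := by
  have hcov : S ⊆ ⋃ c : ℕ, {a | 0 < f a + c * g a} := fun a ha => by
    rw [Set.mem_iUnion]
    rcases (hg0 a).eq_or_lt with h | h
    · exact ⟨0, by simpa using hfg a ha h.symm⟩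
    · obtain ⟨c, hc⟩ := exists_nat_gt (-f a / g a)
      refine ⟨c, ?_⟩
      rw [div_lt_iff₀ h] at hc
      change 0 < f a + c * g a
      linarith
  obtain ⟨c, hc⟩ := hS.elim_directed_cover (fun c : ℕ => {a | 0 < f a + c * g a})
    (fun c => isOpen_lt continuous_const (by fun_prop)) hcov
    (Monotone.directed_le fun c d hcd a ha => lt_of_lt_of_le (Set.mem_ofPred.1 ha)
      (by have := hg0 a; gcongr))
  exact ⟨c, fun a ha => hc ha⟩

/-- The linear forms `x_i ± x_j`. -/
noncomputable def pairForm {σ : Type*} (k : σ × σ × Bool) : MvPolynomial σ ℝ :=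
  if k.2.2 then X k.1 + X k.2.1 else X k.1 - X k.2.1

/-- A linear lift of the quadratic monomial `x_i x_j` along the squares of the forms
`x_i ± x_j`. -/
noncomputable def pairLift {σ : Type*} (i j : σ) : MvPolynomial (σ × σ × Bool) ℝ :=
  C (1 / 4) * (X (i, j, true) - X (i, j, false))

theorem isHomogeneous_pairLift {σ : Type*} (i j : σ) : (pairLift i j).IsHomogeneous 1 := by
  have := (isHomogeneous_C (σ × σ × Bool) (1 / 4 : ℝ)).mul
    ((isHomogeneous_X ℝ (i, j, true)).sub (isHomogeneous_X ℝ (i, j, false)))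
  simpa [pairLift] using this

theorem aeval_pairLift {σ : Type*} (i j : σ) :
    aeval (fun k => pairForm k ^ 2) (pairLift i j) = (X i * X j : MvPolynomial σ ℝ) := by
  simp only [pairLift, pairForm, map_mul, map_sub, aeval_X, aeval_C, if_true, Bool.false_eq_true,
    if_false, algebraMap_eq]
  have : (C (1 / 4) : MvPolynomial σ ℝ) * 4 = 1 := by
    rw [show (4 : MvPolynomial σ ℝ) = C 4 from (map_ofNat C 4).symm, ← C_mul]; norm_num
  linear_combination (X i * X j) * this

theorem aeval_sum_pairForm {σ : Type*} [Fintype σ] :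
    aeval (fun k => pairForm k ^ 2) (∑ k, X k : MvPolynomial (σ × σ × Bool) ℝ) =
      C (4 * Fintype.card σ : ℝ) * ∑ i, (X i : MvPolynomial σ ℝ) ^ 2 := by
  rw [map_sum]
  simp only [aeval_X]
  simp only [Fintype.sum_prod_type, Fintype.sum_bool, pairForm, if_true,
    Bool.false_eq_true, if_false]
  have : ∀ i j : σ, ((X i + X j) ^ 2 + (X i - X j) ^ 2 : MvPolynomial σ ℝ) =
      2 * X i ^ 2 + 2 * X j ^ 2 := fun i j => by ring
  simp only [this, sum_add_distrib, ← mul_sum, sum_const, card_univ, nsmul_eq_mul]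
  rw [C_mul, show (C (Fintype.card σ : ℝ) : MvPolynomial σ ℝ) = Fintype.card σ from map_natCast C _,
    show (C 4 : MvPolynomial σ ℝ) = 4 from map_ofNat C 4]
  ring

/-- Every form of even degree is a form of half the degree in the squares of `x_i ± x_j`. -/
theorem exists_isHomogeneous_aeval_pairForm {σ : Type*} {d : ℕ} {P : MvPolynomial σ ℝ}
    (hP : P.IsHomogeneous (2 * d)) :
    ∃ R : MvPolynomial (σ × σ × Bool) ℝ, R.IsHomogeneous d ∧
      aeval (fun k => pairForm k ^ 2) R = P := by
  have h2 : homogeneousSubmodule σ ℝ 2 ≤ (homogeneousSubmodule (σ × σ × Bool) ℝ 1).map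
      (aeval fun k => pairForm k ^ 2 : MvPolynomial (σ × σ × Bool) ℝ →ₐ[ℝ] _).toLinearMap := by
    rw [← homogeneousSubmodule_one_pow, homogeneousSubmodule_one_eq_span_X, sq,
      Submodule.span_mul_span, Submodule.span_le]
    rintro _ ⟨_, ⟨i, rfl⟩, _, ⟨j, rfl⟩, rfl⟩
    exact ⟨pairLift i j, isHomogeneous_pairLift i j, aeval_pairLift i j⟩
  have h : homogeneousSubmodule σ ℝ (2 * d) ≤ (homogeneousSubmodule (σ × σ × Bool) ℝ d).map
      (aeval fun k => pairForm k ^ 2 : MvPolynomial (σ × σ × Bool) ℝ →ₐ[ℝ] _).toLinearMap := by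
    rw [← homogeneousSubmodule_one_pow _ (2 * d), pow_mul, homogeneousSubmodule_one_pow _ 2,
      ← homogeneousSubmodule_one_pow _ d, Submodule.map_pow]
    exact pow_le_pow_left' h2 d
  obtain ⟨R, hR, hRP⟩ := h hP
  exact ⟨R, hR, hRP⟩

/-- A lift of the relations satisfied by the squares of the forms `x_i ± x_j`; it is nonnegative and
on the standard simplex it vanishes only at such squares. -/
noncomputable def pairRel (σ : Type*) [Fintype σ] : MvPolynomial (σ × σ × Bool) ℝ :=
  (∑ k, X k) ^ 2 * (∑ k, X k - C (4 * Fintype.card σ : ℝ) * ∑ a, pairLift a a) ^ 2 +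
    ∑ k : σ × σ × Bool, ∑ a, (X k * pairLift a a -
      (if k.2.2 then pairLift k.1 a + pairLift k.2.1 a
        else pairLift k.1 a - pairLift k.2.1 a) ^ 2) ^ 2

theorem isHomogeneous_pairRel (σ : Type*) [Fintype σ] : (pairRel σ).IsHomogeneous 4 := by
  have he : (∑ k, X k : MvPolynomial (σ × σ × Bool) ℝ).IsHomogeneous 1 :=
    IsHomogeneous.sum _ _ _ fun k _ => isHomogeneous_X ℝ k
  have ht : (C (4 * Fintype.card σ : ℝ) * ∑ a, pairLift a a :
      MvPolynomial (σ × σ × Bool) ℝ).IsHomogeneous 1 := by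
    simpa using (isHomogeneous_C (σ × σ × Bool) (4 * Fintype.card σ : ℝ)).mul
      (IsHomogeneous.sum univ (fun a : σ => pairLift a a) 1 fun a _ => isHomogeneous_pairLift a a)
  refine ((he.pow 2).mul ((he.sub ht).pow 2)).add
    (IsHomogeneous.sum _ _ _ fun k _ => IsHomogeneous.sum _ _ _ fun a _ => ?_)
  have hl : (if k.2.2 then pairLift k.1 a + pairLift k.2.1 a
      else pairLift k.1 a - pairLift k.2.1 a).IsHomogeneous 1 := by
    split_ifs
    · exact (isHomogeneous_pairLift _ _).add (isHomogeneous_pairLift _ _)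
    · exact (isHomogeneous_pairLift _ _).sub (isHomogeneous_pairLift _ _)
  exact (((isHomogeneous_X ℝ k).mul (isHomogeneous_pairLift a a)).sub (hl.pow 2)).pow 2

theorem aeval_pairRel (σ : Type*) [Fintype σ] :
    aeval (fun k => pairForm k ^ 2) (pairRel σ) = (0 : MvPolynomial σ ℝ) := by
  have h1 : aeval (fun k => pairForm k ^ 2) (∑ k, X k - C (4 * Fintype.card σ : ℝ) *
      ∑ a, pairLift a a) = (0 : MvPolynomial σ ℝ) := by
    have h : aeval (fun k => pairForm k ^ 2) (∑ a, pairLift a a) =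
        ∑ a, (X a : MvPolynomial σ ℝ) ^ 2 := by
      rw [map_sum]
      exact sum_congr rfl fun a _ => by rw [aeval_pairLift, sq]
    rw [map_sub, aeval_sum_pairForm, map_mul (aeval _), h, aeval_C, algebraMap_eq, sub_self]
  rw [pairRel, map_add, map_mul, map_pow _ (_ - _), h1, map_sum]
  simp only [map_sum, map_pow, map_sub, map_mul, aeval_X, aeval_pairLift]
  rw [zero_pow two_ne_zero, mul_zero, zero_add]
  refine sum_eq_zero fun k _ => sum_eq_zero fun a _ => ?_
  rw [pairForm]
  split_ifs
  · rw [map_add, aeval_pairLift, aeval_pairLift]; ring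
  · rw [map_sub, aeval_pairLift, aeval_pairLift]; ring

theorem eval_pairRel_nonneg {σ : Type*} [Fintype σ] (z : σ × σ × Bool → ℝ) :
    0 ≤ eval z (pairRel σ) := by
  rw [pairRel, map_add, map_mul, map_pow, map_pow]
  refine add_nonneg (by positivity) ?_
  simp only [map_sum, map_pow]
  positivity

/-- A zero of `pairRel` on the standard simplex comes from a nonzero point. -/
theorem exists_of_eval_pairRel_eq_zero {σ : Type*} [Fintype σ] [Nonempty σ]
    {z : σ × σ × Bool → ℝ} (hz : ∑ k, z k = 1) (h : eval z (pairRel σ) = 0) :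
    ∃ x : σ → ℝ, x ≠ 0 ∧ ∀ k, eval x (pairForm k) ^ 2 = z k := by
  have hcard : (0 : ℝ) < Fintype.card σ := by exact_mod_cast Fintype.card_pos
  rw [pairRel] at h
  simp only [map_add, map_sum, map_pow, eval_X, hz, map_sub, map_mul, eval_C, one_pow, one_mul] at h
  have hnn : ∀ k ∈ (univ : Finset (σ × σ × Bool)), 0 ≤ ∑ a, (z k * eval z (pairLift a a) -
      eval z (if k.2.2 then pairLift k.1 a + pairLift k.2.1 a
        else pairLift k.1 a - pairLift k.2.1 a) ^ 2) ^ 2 :=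
    fun k _ => sum_nonneg fun a _ => sq_nonneg _
  obtain ⟨h1, h2⟩ := (add_eq_zero_iff_of_nonneg (sq_nonneg _) (sum_nonneg hnn)).1 h
  have h3 := fun k => (sum_eq_zero_iff_of_nonneg fun a _ => sq_nonneg _).1
    ((sum_eq_zero_iff_of_nonneg hnn).1 h2 k (mem_univ k))
  have hsum : 4 * (Fintype.card σ : ℝ) * ∑ a, eval z (pairLift a a) = 1 := by
    have := pow_eq_zero_iff (two_ne_zero) |>.1 h1
    linarith
  obtain ⟨a, ha⟩ : ∃ a, 0 < eval z (pairLift a a) := by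
    by_contra! hcon
    have : ∑ a, eval z (pairLift a a) ≤ 0 := sum_nonpos fun a _ => hcon a
    nlinarith
  set r := √(eval z (pairLift a a)) with hr
  have hr0 : 0 < r := Real.sqrt_pos.2 ha
  have hr2 : r ^ 2 = eval z (pairLift a a) := Real.sq_sqrt ha.le
  set x : σ → ℝ := fun i => eval z (pairLift i a) / r with hx
  have hζ : ∀ k, eval x (pairForm k) ^ 2 = z k := by
    intro k
    have := sub_eq_zero.1 (pow_eq_zero_iff (two_ne_zero) |>.1 (h3 k a (mem_univ a)))
    rw [← hr2] at this
    have hlin : eval x (pairForm k) = eval z (if k.2.2 then pairLift k.1 a + pairLift k.2.1 a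
        else pairLift k.1 a - pairLift k.2.1 a) / r := by
      rw [pairForm]
      split_ifs
      · simp [hx, add_div]
      · simp [hx, sub_div]
    rw [hlin, div_pow, ← this]
    field_simp
  refine ⟨x, ?_, hζ⟩
  intro hx0
  have : ∑ k, z k = 0 := sum_eq_zero fun k _ => by
    rw [← hζ k, hx0, pairForm]
    split_ifs <;> simp
  rw [hz] at this
  exact one_ne_zero this

/-- A matrix version of Reznick's theorem: a positive definite matrix form becomes a sum of squares
after multiplication by a power of the squared norm. -/
theorem exists_isSOSMatrix_pow_smul {σ ι : Type*} [Fintype σ] [Fintype ι] {d : ℕ}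
    {P : Matrix ι ι (MvPolynomial σ ℝ)} (hPs : P.IsSymm)
    (hP : ∀ i j, (P i j).IsHomogeneous (2 * d))
    (hpos : ∀ x : σ → ℝ, x ≠ 0 → ∀ w : ι → ℝ, ‖w‖ = 1 →
      0 < ∑ i, ∑ j, w i * w j * eval x (P i j)) :
    ∃ N : ℕ, IsSOSMatrix ((∑ i, (X i : MvPolynomial σ ℝ) ^ 2) ^ (2 * N) • P) := by
  classical
  rcases isEmpty_or_nonempty σ with hσ | hσ
  · exact ⟨1, by simpa using isSOSMatrix_zero⟩
  set φ : MvPolynomial (σ × σ × Bool) ℝ →ₐ[ℝ] MvPolynomial σ ℝ :=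
    aeval (fun k => pairForm k ^ 2) with hφ
  choose L hL hLP using fun i j => exists_isHomogeneous_aeval_pairForm (hP i j)
  set e : MvPolynomial (σ × σ × Bool) ℝ := ∑ k, X k with he
  have heh : e.IsHomogeneous 1 := IsHomogeneous.sum _ _ _ fun k _ => isHomogeneous_X ℝ k
  set Q : ι → ι → MvPolynomial (σ × σ × Bool) ℝ := fun i j => C (1 / 2) * (L i j + L j i) with hQ
  have hQh : ∀ i j, (Q i j).IsHomogeneous d := fun i j => by
    have := (isHomogeneous_C (σ × σ × Bool) (1 / 2 : ℝ)).mul ((hL i j).add (hL j i))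
    rwa [zero_add] at this
  have hQP : ∀ i j, φ (Q i j) = P i j := fun i j => by
    rw [hQ, map_mul, map_add, hLP, hLP, hPs.apply i j, ← two_mul, aeval_C, ← mul_assoc,
      algebraMap_eq, show (2 : MvPolynomial σ ℝ) = C 2 from (map_ofNat C 2).symm, ← C_mul]
    norm_num
  have hQe : ∀ x i j, eval (fun k => eval x (pairForm k) ^ 2) (Q i j) = eval x (P i j) :=
    fun x i j => by
      have := comp_aeval_apply (fun k : σ × σ × Bool => pairForm k ^ 2) (aeval x) (Q i j)
      rw [← hφ, hQP] at this
      simpa [coe_aeval_eq_eval] using this.symm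
  obtain ⟨c, hc⟩ := ((isCompact_stdSimplex ℝ (σ × σ × Bool)).prod
    (isCompact_sphere (0 : ι → ℝ) 1)).exists_forall_pos_add_mul
    (f := fun a => ∑ i, ∑ j, a.2 i * a.2 j * eval a.1 (Q i j))
    (g := fun a => (∑ i, a.2 i ^ 2) * eval a.1 (pairRel σ))
    (by
      have : ∀ i j, Continuous fun a : (σ × σ × Bool → ℝ) × (ι → ℝ) => eval a.1 (Q i j) :=
        fun i j => (MvPolynomial.continuous_eval _).comp continuous_fst
      fun_prop)
    (by
      have : Continuous fun a : (σ × σ × Bool → ℝ) × (ι → ℝ) => eval a.1 (pairRel σ) :=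
        (MvPolynomial.continuous_eval _).comp continuous_fst
      fun_prop)
    (fun a => mul_nonneg (sum_nonneg fun i _ => sq_nonneg _) (eval_pairRel_nonneg _))
    (by
      rintro ⟨z, w⟩ ⟨⟨hz0, hz1⟩, hw⟩ hzero
      rw [mem_sphere_zero_iff_norm] at hw
      have hw2 : ∑ i, w i ^ 2 ≠ 0 := by
        intro h0
        have : w = 0 := funext fun i => by
          simpa using (sum_eq_zero_iff_of_nonneg fun i _ => sq_nonneg (w i)).1 h0 i (mem_univ i)
        simp [this] at hw
      obtain ⟨x, hx, hxz⟩ := exists_of_eval_pairRel_eq_zero hz1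
        ((mul_eq_zero.1 hzero).resolve_left hw2)
      have hz : z = fun k => eval x (pairForm k) ^ 2 := funext fun k => (hxz k).symm
      have := hpos x hx w hw
      simpa only [hz, hQe] using this)
  set R : ι → ι → MvPolynomial (σ × σ × Bool) ℝ := fun i j =>
    e ^ 4 * Q i j + if i = j then C (c : ℝ) * (e ^ d * pairRel σ) else 0 with hR
  have hRh : ∀ i j, (R i j).IsHomogeneous (4 + d) := fun i j => by
    refine IsHomogeneous.add (by simpa using (heh.pow 4).mul (hQh i j)) ?_
    split_ifs
    · have := (isHomogeneous_C (σ × σ × Bool) (c : ℝ)).mul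
        ((heh.pow d).mul (isHomogeneous_pairRel σ))
      rwa [one_mul, zero_add, add_comm] at this
    · exact isHomogeneous_zero _ _ _
  obtain ⟨N₀, hN₀⟩ := MvPolynomial.exists_polya hRh fun z hz0 hz1 w hw => by
    have := hc (z, w) ⟨⟨hz0, hz1⟩, mem_sphere_zero_iff_norm.2 hw⟩
    refine this.trans_eq ?_
    have hez : eval z e = 1 := by simp [he, hz1]
    have hRe : ∀ i j, eval z (R i j) =
        eval z (Q i j) + if i = j then c * eval z (pairRel σ) else 0 := fun i j => by
      simp only [hR, map_add, map_mul, map_pow, hez, one_pow, one_mul]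
      split_ifs <;> simp [hez]
    simp only [hRe, mul_add, sum_add_distrib, mul_ite, mul_zero, sum_ite_eq, mem_univ, if_true,
      sum_mul, mul_sum]
    congr 1
    exact sum_congr rfl fun i _ => by ring
  set N := 2 * N₀ with hN
  have hsos := isSOSMatrix_aeval_sq (σ := σ) (ι := ι) (R := fun i j => e ^ N * R i j)
    (fun i j => by
      simp only [hR, hQ, eq_comm (a := i) (b := j), add_comm (L i j)])
    (hN₀ N (by omega)) pairForm
  set κ : ℝ := 4 * Fintype.card σ with hκ
  have hκ0 : κ ≠ 0 := by positivity
  refine ⟨N₀ + 2, ?_⟩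
  have := hsos.sq_smul (C ((κ⁻¹) ^ (N₀ + 2)))
  convert this using 1
  refine Matrix.ext fun i j => ?_
  simp only [Matrix.smul_apply, smul_eq_mul, of_apply]
  have hφR : φ (e ^ N * R i j) = (C κ * ∑ i, X i ^ 2) ^ (N + 4) * P i j := by
    have h1 : φ e = C κ * ∑ i, X i ^ 2 := aeval_sum_pairForm
    have h2 : φ (if i = j then C (c : ℝ) * (e ^ d * pairRel σ) else 0) = 0 := by
      split_ifs
      · rw [map_mul, map_mul, aeval_pairRel, mul_zero, mul_zero]
      · exact map_zero _
    rw [hR, map_mul, map_add, h2, map_mul, hQP, map_pow, map_pow, h1]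
    ring
  change _ = _ * φ (e ^ N * R i j)
  rw [hφR, mul_pow, ← C_pow, ← C_pow, ← mul_assoc, ← mul_assoc, ← C_mul, hN]
  have : ((κ⁻¹) ^ (N₀ + 2)) ^ 2 * κ ^ (2 * N₀ + 4) = 1 := by
    rw [← pow_mul, show (N₀ + 2) * 2 = 2 * N₀ + 4 by ring, ← mul_pow, inv_mul_cancel₀ hκ0, one_pow]
  rw [this, C_1, one_mul, show 2 * (N₀ + 2) = 2 * N₀ + 4 by ring]

/-- Substituting real values for the `x`-variables. -/
noncomputable def specX {n m : ℕ} (x : Fin n → ℝ) :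
    MvPolynomial (Fin n ⊕ Fin m) ℝ →ₐ[ℝ] MvPolynomial (Fin m) ℝ :=
  aeval (Sum.elim (fun i => C (x i)) X)

theorem eval_specX {n m : ℕ} (x : Fin n → ℝ) (y : Fin m → ℝ)
    (q : MvPolynomial (Fin n ⊕ Fin m) ℝ) : eval y (specX x q) = eval (Sum.elim x y) q := by
  have := comp_aeval_apply (Sum.elim (fun i => C (x i)) X : Fin n ⊕ Fin m → _)
    (aeval y : MvPolynomial (Fin m) ℝ →ₐ[ℝ] ℝ) q
  have h : (fun i => (aeval y) ((Sum.elim (fun i => C (x i)) X : Fin n ⊕ Fin m → _) i)) =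
      Sum.elim x y := by
    ext i
    cases i <;> simp
  rw [h] at this
  exact this

theorem momentsFinite.integrable_eval_sumElim {n m : ℕ} {ν : Measure (Fin m → ℝ)}
    (hmom : momentsFinite ν) (x : Fin n → ℝ) (q : MvPolynomial (Fin n ⊕ Fin m) ℝ) :
    Integrable (fun y => eval (Sum.elim x y) q) ν :=
  (hmom.integrable_eval (specX x q)).congr (ae_of_all _ fun y => eval_specX x y q)

/-- `integY` is pointwise integration over `y`. -/
theorem eval_integY {n m : ℕ} {ν : Measure (Fin m → ℝ)} (hmom : momentsFinite ν)
    (x : Fin n → ℝ) (q : MvPolynomial (Fin n ⊕ Fin m) ℝ) :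
    eval x (integY ν q) = ∫ y, eval (Sum.elim x y) q ∂ν := by
  have hmono : ∀ (d : (Fin n ⊕ Fin m) →₀ ℕ) (y : Fin m → ℝ),
      q.coeff d * ∏ i, Sum.elim x y i ^ d i =
      (q.coeff d * ∏ i, x i ^ d (Sum.inl i)) * ∏ j, y j ^ d (Sum.inr j) := fun d y => by
    rw [Fintype.prod_sum_type]
    simp only [Sum.elim_inl, Sum.elim_inr]
    ring
  have hq : ∀ y, eval (Sum.elim x y) q = ∑ d ∈ q.support,
      (q.coeff d * ∏ i, x i ^ d (Sum.inl i)) * ∏ j, y j ^ d (Sum.inr j) := fun y => by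
    simp only [eval_eq', hmono]
  simp only [hq]
  rw [integral_finsetSum]
  · rw [integY, eval_sum]
    refine sum_congr rfl fun d _ => ?_
    rw [integral_const_mul, eval_monomial, Finsupp.prod_fintype _ _ fun i => pow_zero _]
    simp only [xPart, Finsupp.comapDomain_apply]
    ring
  · intro d _
    refine Integrable.const_mul ?_ _
    exact (hmom.integrable_eval (∏ j, X j ^ d (Sum.inr j))).congr
      (ae_of_all _ fun y => by simp)

theorem IsHomogeneousX.integY {n m k : ℕ} {q : MvPolynomial (Fin n ⊕ Fin m) ℝ}
    (hq : IsHomogeneousX q k) (ν : Measure (Fin m → ℝ)) : (integY ν q).IsHomogeneous k := by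
  refine IsHomogeneous.sum _ _ _ fun d hd => isHomogeneous_monomial _ ?_
  rw [Finsupp.degree_eq_sum, ← hq d hd]
  simp [xPart]

theorem isHomogeneousX_iff {n m k : ℕ} {q : MvPolynomial (Fin n ⊕ Fin m) ℝ} :
    IsHomogeneousX q k ↔
      IsWeightedHomogeneous (Sum.elim (fun _ => 1) (fun _ => 0) : Fin n ⊕ Fin m → ℕ) q k := by
  refine forall_congr' fun d => ?_
  rw [mem_support_iff, Finsupp.weight_apply, Finsupp.sum_fintype _ _ (by simp),
    Fintype.sum_sum_type]
  simp

theorem IsHomogeneousX.mul {n m k l : ℕ} {p q : MvPolynomial (Fin n ⊕ Fin m) ℝ}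
    (hp : IsHomogeneousX p k) (hq : IsHomogeneousX q l) : IsHomogeneousX (p * q) (k + l) := by
  rw [isHomogeneousX_iff] at *
  exact hp.mul hq

theorem IsHomogeneousX.pow {n m k : ℕ} {p : MvPolynomial (Fin n ⊕ Fin m) ℝ}
    (hp : IsHomogeneousX p k) (r : ℕ) : IsHomogeneousX (p ^ r) (r * k) := by
  rw [isHomogeneousX_iff] at *
  exact hp.pow r

theorem IsHomogeneousX.sum {n m k : ℕ} {ι : Type*} {s : Finset ι}
    {p : ι → MvPolynomial (Fin n ⊕ Fin m) ℝ} (hp : ∀ i ∈ s, IsHomogeneousX (p i) k) :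
    IsHomogeneousX (∑ i ∈ s, p i) k := by
  simp only [isHomogeneousX_iff] at *
  exact IsWeightedHomogeneous.sum _ _ _ hp

theorem isHomogeneousX_C {n m : ℕ} (r : ℝ) :
    IsHomogeneousX (C r : MvPolynomial (Fin n ⊕ Fin m) ℝ) 0 :=
  isHomogeneousX_iff.2 (isWeightedHomogeneous_C _ r)

theorem isHomogeneousX_zero {n m : ℕ} (k : ℕ) :
    IsHomogeneousX (0 : MvPolynomial (Fin n ⊕ Fin m) ℝ) k := by
  intro d hd
  simp at hd

theorem MvPolynomial.IsHomogeneous.rename_inl {n m k : ℕ} {p : MvPolynomial (Fin n) ℝ}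
    (hp : p.IsHomogeneous k) :
    IsHomogeneousX (rename Sum.inl p : MvPolynomial (Fin n ⊕ Fin m) ℝ) k := by
  intro d hd
  obtain ⟨u, rfl, hu⟩ := coeff_rename_ne_zero _ _ _ (mem_support_iff.1 hd)
  simp only [Finsupp.mapDomain_apply Sum.inl_injective]
  exact hp.sum_eq (mem_support_iff.2 hu)

theorem isHomogeneousX_rename_inr {n m : ℕ} (p : MvPolynomial (Fin m) ℝ) :
    IsHomogeneousX (rename Sum.inr p : MvPolynomial (Fin n ⊕ Fin m) ℝ) 0 := by
  intro d hd
  obtain ⟨u, rfl, hu⟩ := coeff_rename_ne_zero _ _ _ (mem_support_iff.1 hd)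
  exact sum_eq_zero fun i _ => Finsupp.mapDomain_of_notMem_range _ _ (by simp)

/-- The functions `t (1 - t) ^ (2 s)` decrease in `s` on `[-1, 1]`. -/
theorem mul_one_sub_pow_antitone {t : ℝ} (ht : |t| ≤ 1) :
    Antitone fun s : ℕ => t * (1 - t) ^ (2 * s) := by
  intro r s hrs
  obtain ⟨h1, h2⟩ := abs_le.1 ht
  rcases le_or_gt 0 t with h | h
  · exact mul_le_mul_of_nonneg_left
      (pow_le_pow_of_le_one (by linarith) (by linarith) (by omega)) h
  · exact mul_le_mul_of_nonpos_left (pow_le_pow_right₀ (by linarith) (by omega)) h.le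

/-- If `f` is positive on a compact set wherever finitely many functions `g k` are nonnegative, then
`f` minus a combination of the `g k` with square multipliers is positive on the compact set. -/
theorem IsCompact.exists_forall_pos_sub_sum {α κ : Type*} [TopologicalSpace α] [Fintype κ]
    {Z : Set α} (hZ : IsCompact Z) {f u : α → ℝ} {g : κ → α → ℝ} (hf : Continuous f)
    (hu : Continuous u) (hg : ∀ k, Continuous (g k)) (hu0 : ∀ a ∈ Z, 0 < u a)
    (hg1 : ∀ k, ∀ a ∈ Z, |g k a| ≤ 1) (hfg : ∀ a ∈ Z, (∀ k, 0 ≤ g k a) → 0 < f a) :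
    ∃ s : ℕ, ∀ a ∈ Z, 0 < f a - (∑ k, g k a * (1 - g k a) ^ (2 * s)) * u a := by
  have hcov : Z ⊆ ⋃ s : ℕ, {a | 0 < f a - (∑ k, g k a * (1 - g k a) ^ (2 * s)) * u a} := by
    intro a ha
    rw [Set.mem_iUnion]
    by_cases hall : ∀ k, 0 ≤ g k a
    · have hterm : ∀ k, Filter.Tendsto (fun s : ℕ => g k a * (1 - g k a) ^ (2 * s))
          Filter.atTop (nhds 0) := fun k => by
        rcases (hall k).eq_or_lt with h | h
        · simp [← h]
        · have h1 := (abs_le.1 (hg1 k a ha)).2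
          have := tendsto_pow_atTop_nhds_zero_of_lt_one (r := (1 - g k a) ^ 2) (by positivity)
            (by nlinarith)
          simpa only [pow_mul, mul_zero] using this.const_mul (g k a)
      have hlim : Filter.Tendsto
          (fun s : ℕ => f a - (∑ k, g k a * (1 - g k a) ^ (2 * s)) * u a) Filter.atTop
          (nhds (f a)) := by
        have := ((tendsto_finsetSum univ fun k _ => hterm k).mul_const (u a)).const_sub (f a)
        simpa using this
      exact (hlim.eventually (lt_mem_nhds (hfg a ha hall))).exists
    · push Not at hall
      obtain ⟨k₀, hk₀⟩ := hall
      have hua := hu0 a ha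
      obtain ⟨s, hs⟩ := exists_nat_gt ((Fintype.card κ * u a - f a) / (2 * g k₀ a ^ 2 * u a))
      rw [div_lt_iff₀ (by have := sq_pos_of_neg hk₀; positivity)] at hs
      refine ⟨s, ?_⟩
      change 0 < f a - (∑ k, g k a * (1 - g k a) ^ (2 * s)) * u a
      have hle : ∀ k, g k a * (1 - g k a) ^ (2 * s) ≤ 1 := fun k =>
        (mul_one_sub_pow_antitone (hg1 k a ha) (Nat.zero_le s)).trans
          (by simpa using (abs_le.1 (hg1 k a ha)).2)
      have hk : g k₀ a * (1 - g k₀ a) ^ (2 * s) ≤ -(2 * s * g k₀ a ^ 2) := by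
        have := one_add_mul_le_pow (a := -g k₀ a) (by linarith) (2 * s)
        rw [← sub_eq_add_neg] at this
        have := mul_le_mul_of_nonpos_left this hk₀.le
        push_cast at this
        nlinarith
      classical
      have hsum : ∑ k, g k a * (1 - g k a) ^ (2 * s) ≤
          Fintype.card κ - 2 * s * g k₀ a ^ 2 := by
        have h2 : ∀ k, g k a * (1 - g k a) ^ (2 * s) ≤
            1 + if k = k₀ then -(2 * s * g k₀ a ^ 2) else 0 := fun k => by
          split_ifs with h
          · subst h; linarith
          · simpa using hle k
        refine (sum_le_sum fun k _ => h2 k).trans (le_of_eq ?_)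
        simp [sum_add_distrib, sub_eq_add_neg]
      nlinarith [mul_le_mul_of_nonneg_right hsum hua.le]
  obtain ⟨t, ht⟩ := hZ.elim_finite_subcover _
    (fun s => isOpen_lt continuous_const (by fun_prop)) hcov
  refine ⟨t.sup id, fun a ha => ?_⟩
  obtain ⟨s, hs, has⟩ := Set.mem_iUnion₂.1 (ht ha)
  refine lt_of_lt_of_le (Set.mem_ofPred.1 has) ?_
  have hua := (hu0 a ha).le
  have hst : s ≤ t.sup id := le_sup (f := id) hs
  gcongr ?_ - ?_ * _
  exact sum_le_sum fun k _ => mul_one_sub_pow_antitone (hg1 k a ha) hst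

theorem integY_sum_rename_mul {n m : ℕ} {ν : Measure (Fin m → ℝ)} (hmom : momentsFinite ν)
    {κ : Type*} (s : Finset κ) (p : κ → MvPolynomial (Fin n) ℝ)
    (t : κ → MvPolynomial (Fin n ⊕ Fin m) ℝ) :
    integY ν (∑ k ∈ s, rename Sum.inl (p k) * t k) = ∑ k ∈ s, p k * integY ν (t k) := by
  refine MvPolynomial.funext fun x => ?_
  have hl : ∀ y : Fin m → ℝ, Sum.elim x y ∘ Sum.inl = x := fun y => Sum.elim_comp_inl x y
  rw [eval_integY hmom, eval_sum]
  simp only [eval_sum, map_mul, eval_rename, hl]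
  rw [integral_finsetSum _ fun k _ => (hmom.integrable_eval_sumElim x (t k)).const_mul _]
  exact sum_congr rfl fun k _ => by rw [integral_const_mul, eval_integY hmom]

/-- The polynomial `h(y)² vᵀ G(x, y) v`. -/
noncomputable def testPoly {n m q : ℕ}
    (G : Matrix (Fin q) (Fin q) (MvPolynomial (Fin n ⊕ Fin m) ℝ))
    (k : (Fin q → ℝ) × MvPolynomial (Fin m) ℝ) : MvPolynomial (Fin n ⊕ Fin m) ℝ :=
  rename Sum.inr k.2 ^ 2 * ∑ a, ∑ c, C (k.1 a * k.1 c) * G c a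

theorem isHomogeneousX_testPoly {n m q d : ℕ}
    {G : Matrix (Fin q) (Fin q) (MvPolynomial (Fin n ⊕ Fin m) ℝ)}
    (hG : ∀ i j, IsHomogeneousX (G i j) d) (k : (Fin q → ℝ) × MvPolynomial (Fin m) ℝ) :
    IsHomogeneousX (testPoly G k) d := by
  have h1 : IsHomogeneousX (∑ a, ∑ c, C (k.1 a * k.1 c) * G c a) d :=
    IsHomogeneousX.sum fun a _ => IsHomogeneousX.sum fun c _ => by
      simpa using (isHomogeneousX_C (k.1 a * k.1 c)).mul (hG c a)
  simpa [testPoly] using ((isHomogeneousX_rename_inr k.2).pow 2).mul h1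

theorem eval_testPoly {n m q : ℕ}
    (G : Matrix (Fin q) (Fin q) (MvPolynomial (Fin n ⊕ Fin m) ℝ))
    (k : (Fin q → ℝ) × MvPolynomial (Fin m) ℝ) (x : Fin n → ℝ) (y : Fin m → ℝ) :
    eval (Sum.elim x y) (testPoly G k) =
      eval y k.2 ^ 2 * ∑ a, ∑ c, k.1 a * k.1 c * eval (Sum.elim x y) (G c a) := by
  simp only [testPoly, map_mul, map_pow, eval_rename, Sum.elim_comp_inr, map_sum, eval_C]

theorem isCompact_sum_sq_eq_one (n : ℕ) : IsCompact {x : Fin n → ℝ | ∑ i, x i ^ 2 = 1} := by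
  refine (isCompact_closedBall (0 : Fin n → ℝ) 1).of_isClosed_subset
    (isClosed_eq (by fun_prop) continuous_const) fun x hx => ?_
  rw [mem_closedBall_zero_iff, pi_norm_le_iff_of_nonneg zero_le_one]
  intro i
  have := single_le_sum (f := fun i => x i ^ 2) (fun i _ => sq_nonneg (x i)) (mem_univ i)
  rw [Set.mem_ofPred.1 hx] at this
  rw [Real.norm_eq_abs]
  exact (sq_le_one_iff_abs_le_one _).1 this

/-- A constraint violated at `x` is detected by one of the forms `∫ h(y)² vᵀ G(x, y) v dν(y)`. -/
theorem exists_integY_testPoly_neg {n m q : ℕ} {Y : Set (Fin m → ℝ)}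
    {ν : Measure (Fin m → ℝ)} (hsupp : hasSupport ν Y) (hmom : momentsFinite ν)
    (hcar : Carleman ν) {G : Matrix (Fin q) (Fin q) (MvPolynomial (Fin n ⊕ Fin m) ℝ)}
    (hGs : G.IsSymm) {x : Fin n → ℝ}
    (hx : ¬ ∀ y ∈ Y, (evalMat (Sum.elim x y) G).PosSemidef) :
    ∃ k : (Fin q → ℝ) × MvPolynomial (Fin m) ℝ,
      (∀ x : Fin n → ℝ, ∑ i, x i ^ 2 = 1 → |eval x (integY ν (testPoly G k))| ≤ 1) ∧
      eval x (integY ν (testPoly G k)) < 0 := by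
  push Not at hx
  obtain ⟨y, hy, hGy⟩ := hx
  obtain ⟨v, hv⟩ : ∃ v : Fin q → ℝ,
      ∑ a, ∑ c, v a * v c * eval (Sum.elim x y) (G c a) < 0 := by
    by_contra! hcon
    refine hGy (Matrix.PosSemidef.of_dotProduct_mulVec_nonneg ?_ fun v => ?_)
    · rw [IsHermitian, conjTranspose_eq_transpose_of_trivial]
      exact Matrix.ext fun i j => by simp [evalMat, hGs.apply i j]
    · have : star v ⬝ᵥ (evalMat (Sum.elim x y) G *ᵥ v) =
          ∑ a, ∑ c, v a * v c * eval (Sum.elim x y) (G c a) := by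
        simp only [dotProduct, mulVec, mul_sum, star_trivial, evalMat, map_apply]
        exact sum_congr rfl fun a _ => sum_congr rfl fun c _ => by rw [hGs.apply a c]; ring
      exact this ▸ hcon v
  have hspec : ∀ y, eval y (specX x (∑ a, ∑ c, C (v a * v c) * G c a)) =
      ∑ a, ∑ c, v a * v c * eval (Sum.elim x y) (G c a) := fun y => by
    simp only [eval_specX, map_mul, map_sum, eval_C]
  obtain ⟨h, hh⟩ := hcar.exists_integral_sq_mul_neg hsupp hmom
    (specX x (∑ a, ∑ c, C (v a * v c) * G c a)) hy (by rwa [hspec])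
  have hscale : ∀ (r : ℝ) (x : Fin n → ℝ), eval x (integY ν (testPoly G (v, C r * h))) =
      r ^ 2 * eval x (integY ν (testPoly G (v, h))) := fun r x => by
    rw [eval_integY hmom, eval_integY hmom, ← integral_const_mul]
    congr 1
    ext y
    simp only [eval_testPoly, map_mul, eval_C]
    ring
  obtain ⟨B, hB⟩ := (isCompact_sum_sq_eq_one n).exists_bound_of_continuousOn
    (MvPolynomial.continuous_eval (integY ν (testPoly G (v, h)))).continuousOn
  have hB' : ∀ x : Fin n → ℝ, ∑ i, x i ^ 2 = 1 →
      |eval x (integY ν (testPoly G (v, h)))| ≤ |B| := fun x hx => (hB x hx).trans (le_abs_self B)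
  refine ⟨(v, C (1 + |B|)⁻¹ * h), fun x hx => ?_, ?_⟩
  · have hB0 := abs_nonneg B
    rw [hscale, abs_mul, abs_of_nonneg (sq_nonneg _), inv_pow, inv_mul_le_iff₀ (by positivity)]
    nlinarith [hB' x hx]
  · rw [hscale]
    refine mul_neg_of_pos_of_neg (by positivity) ?_
    rw [eval_integY hmom]
    simpa only [eval_testPoly, hspec] using hh

/-- Finitely many of the forms `∫ h(y)² vᵀ G(x, y) v dν(y)` suffice to detect the positivity set. -/
theorem exists_finset_testPoly {n m p q : ℕ} {Y : Set (Fin m → ℝ)}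
    {ν : Measure (Fin m → ℝ)} (hsupp : hasSupport ν Y) (hmom : momentsFinite ν)
    (hcar : Carleman ν) {F : Matrix (Fin p) (Fin p) (MvPolynomial (Fin n) ℝ)}
    {G : Matrix (Fin q) (Fin q) (MvPolynomial (Fin n ⊕ Fin m) ℝ)} (hGs : G.IsSymm)
    (hpd : ∀ x : Fin n → ℝ, x ≠ 0 →
      (∀ y ∈ Y, (evalMat (Sum.elim x y) G).PosSemidef) → (evalMat x F).PosDef) :
    ∃ t : Finset ((Fin q → ℝ) × MvPolynomial (Fin m) ℝ),
      (∀ k ∈ t, ∀ x : Fin n → ℝ, ∑ i, x i ^ 2 = 1 → |eval x (integY ν (testPoly G k))| ≤ 1) ∧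
      ∀ x : Fin n → ℝ, ∑ i, x i ^ 2 = 1 → ∀ w : Fin p → ℝ, ‖w‖ = 1 →
        (∀ k ∈ t, 0 ≤ eval x (integY ν (testPoly G k))) →
        0 < ∑ i, ∑ j, w i * w j * eval x (F i j) := by
  classical
  have hFc : Continuous fun a : (Fin n → ℝ) × (Fin p → ℝ) =>
      ∑ i, ∑ j, a.2 i * a.2 j * eval a.1 (F i j) := by
    have : ∀ i j, Continuous fun a : (Fin n → ℝ) × (Fin p → ℝ) => eval a.1 (F i j) :=
      fun i j => (MvPolynomial.continuous_eval _).comp continuous_fst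
    fun_prop
  set Z : Set ((Fin n → ℝ) × (Fin p → ℝ)) :=
    ({x | ∑ i, x i ^ 2 = 1} ×ˢ Metric.sphere 0 1) ∩
      {a | ∑ i, ∑ j, a.2 i * a.2 j * eval a.1 (F i j) ≤ 0} with hZ
  have hZc : IsCompact Z := ((isCompact_sum_sq_eq_one n).prod (isCompact_sphere _ _)).inter_right
    (isClosed_le hFc continuous_const)
  obtain ⟨t, ht⟩ := hZc.elim_finite_subcover
    (fun k : {k : (Fin q → ℝ) × MvPolynomial (Fin m) ℝ // ∀ x : Fin n → ℝ, ∑ i, x i ^ 2 = 1 →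
      |eval x (integY ν (testPoly G k))| ≤ 1} =>
      {a : (Fin n → ℝ) × (Fin p → ℝ) | eval a.1 (integY ν (testPoly G k)) < 0})
    (fun k => isOpen_lt ((MvPolynomial.continuous_eval _).comp continuous_fst) continuous_const)
    (by
      rintro ⟨x, w⟩ ⟨⟨hx, hw⟩, hneg⟩
      rw [mem_sphere_zero_iff_norm] at hw
      have hx0 : x ≠ 0 := by
        rintro rfl
        simp at hx
      have hw0 : w ≠ 0 := by
        rintro rfl
        simp at hw
      obtain ⟨k, hk, hkx⟩ := exists_integY_testPoly_neg hsupp hmom hcar hGs (x := x)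
        fun hall => by
          have h1 := (posDef_iff_dotProduct_mulVec.1 (hpd x hx0 hall)).2 hw0
          have h2 : star w ⬝ᵥ (evalMat x F *ᵥ w) = ∑ i, ∑ j, w i * w j * eval x (F i j) := by
            simp only [dotProduct, mulVec, mul_sum, star_trivial, evalMat, map_apply]
            exact sum_congr rfl fun a _ => sum_congr rfl fun c _ => by ring
          rw [h2] at h1
          exact absurd h1 (not_lt.2 hneg)
      exact Set.mem_iUnion.2 ⟨⟨k, hk⟩, hkx⟩)
  refine ⟨t.image Subtype.val, ?_, fun x hx w hw hall => ?_⟩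
  · intro k hk
    obtain ⟨k', _, rfl⟩ := mem_image.1 hk
    exact k'.2
  · by_contra! hcon
    obtain ⟨k, hk, hkx⟩ := Set.mem_iUnion₂.1
      (ht (show (x, w) ∈ Z from ⟨⟨hx, mem_sphere_zero_iff_norm.2 hw⟩, hcon⟩))
    exact absurd (hall k (mem_image_of_mem _ hk)) (not_le.2 hkx)

theorem MvPolynomial.IsHomogeneous.eval_smul_eq {σ : Type*} [Fintype σ] {d : ℕ}
    {P : MvPolynomial σ ℝ} (hP : P.IsHomogeneous d) (r : ℝ) (x : σ → ℝ) :
    eval (r • x) P = r ^ d * eval x P := by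
  rw [eval_eq', eval_eq', mul_sum]
  refine sum_congr rfl fun α hα => ?_
  simp only [Pi.smul_apply, smul_eq_mul, mul_pow, prod_mul_distrib, prod_pow_eq_pow_sum,
    hP.sum_eq hα]
  ring

theorem isHomogeneous_sum_X_sq_pow {σ : Type*} [Fintype σ] (N : ℕ) :
    ((∑ i, (X i : MvPolynomial σ ℝ) ^ 2) ^ N).IsHomogeneous (2 * N) :=
  (IsHomogeneous.sum _ _ 2 fun i _ => by simpa using (isHomogeneous_X ℝ i).pow 2).pow N

/-- The residual matrix form left after subtracting the weighted constraints. -/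
noncomputable def residualForm {σ ι κ : Type*} [Fintype σ] [DecidableEq ι] [Fintype κ]
    (F : Matrix ι ι (MvPolynomial σ ℝ)) (g : κ → MvPolynomial σ ℝ) (f e s : ℕ) :
    Matrix ι ι (MvPolynomial σ ℝ) :=
  let r : MvPolynomial σ ℝ := ∑ i, X i ^ 2
  r ^ (f + (2 * s + 1) * e) • F -
    Matrix.diagonal fun _ => ∑ k, (r ^ f * (r ^ e - g k) ^ s) ^ 2 * g k

theorem isHomogeneous_residualForm {σ ι κ : Type*} [Fintype σ] [DecidableEq ι] [Fintype κ]
    {F : Matrix ι ι (MvPolynomial σ ℝ)} {g : κ → MvPolynomial σ ℝ} {f e : ℕ}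
    (hF : ∀ i j, (F i j).IsHomogeneous (2 * f)) (hg : ∀ k, (g k).IsHomogeneous (2 * e))
    (s : ℕ) (i j : ι) :
    (residualForm F g f e s i j).IsHomogeneous (2 * (2 * f + (2 * s + 1) * e)) := by
  simp only [residualForm, Matrix.sub_apply, Matrix.smul_apply, smul_eq_mul, diagonal_apply]
  refine IsHomogeneous.sub ?_ ?_
  · convert (isHomogeneous_sum_X_sq_pow (f + (2 * s + 1) * e)).mul (hF i j) using 1
    · rfl
    · ring
  · split_ifs
    · refine IsHomogeneous.sum _ _ _ fun k _ => ?_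
      convert (((isHomogeneous_sum_X_sq_pow f).mul
        (((isHomogeneous_sum_X_sq_pow e).sub (hg k)).pow s)).pow 2).mul (hg k) using 1
      · rfl
      · ring
    · exact isHomogeneous_zero _ _ _

theorem eval_residualForm {σ ι κ : Type*} [Fintype σ] [DecidableEq ι] [Fintype κ]
    (F : Matrix ι ι (MvPolynomial σ ℝ)) (g : κ → MvPolynomial σ ℝ) (f e s : ℕ)
    {x : σ → ℝ} (hx : ∑ i, x i ^ 2 = 1) (i j : ι) :
    eval x (residualForm F g f e s i j) = eval x (F i j) -
      if i = j then ∑ k, eval x (g k) * (1 - eval x (g k)) ^ (2 * s) else 0 := by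
  have hr : eval x (∑ i, X i ^ 2) = 1 := by simpa using hx
  simp only [residualForm, Matrix.sub_apply, Matrix.smul_apply, smul_eq_mul, diagonal_apply, map_sub, map_mul,
    map_pow, hr, one_pow, one_mul]
  split_ifs
  · rw [eval_sum]
    congr 1
    refine sum_congr rfl fun k _ => ?_
    simp only [map_sub, map_mul, map_pow, hr, one_pow, one_mul]
    ring
  · simp

theorem exists_isSOSMatrix_residualForm {σ ι κ : Type*} [Fintype σ] [Fintype ι] [DecidableEq ι]
    [Fintype κ] {F : Matrix ι ι (MvPolynomial σ ℝ)} {g : κ → MvPolynomial σ ℝ} {f e : ℕ}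
    (hFs : F.IsSymm) (hF : ∀ i j, (F i j).IsHomogeneous (2 * f))
    (hg : ∀ k, (g k).IsHomogeneous (2 * e))
    (hcpt : IsCompact {x : σ → ℝ | ∑ i, x i ^ 2 = 1})
    (hg1 : ∀ k, ∀ x : σ → ℝ, ∑ i, x i ^ 2 = 1 → |eval x (g k)| ≤ 1)
    (hpos : ∀ x : σ → ℝ, ∑ i, x i ^ 2 = 1 → ∀ w : ι → ℝ, ‖w‖ = 1 →
      (∀ k, 0 ≤ eval x (g k)) → 0 < ∑ i, ∑ j, w i * w j * eval x (F i j)) :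
    ∃ s N, IsSOSMatrix ((∑ i, (X i : MvPolynomial σ ℝ) ^ 2) ^ (2 * N) •
      residualForm F g f e s) := by
  have hcomp : ∀ P : MvPolynomial σ ℝ, Continuous fun a : (σ → ℝ) × (ι → ℝ) => eval a.1 P :=
    fun P => (MvPolynomial.continuous_eval _).comp continuous_fst
  obtain ⟨s, hs⟩ := (hcpt.prod (isCompact_sphere (0 : ι → ℝ) 1)).exists_forall_pos_sub_sum
    (f := fun a => ∑ i, ∑ j, a.2 i * a.2 j * eval a.1 (F i j)) (u := fun a => ∑ i, a.2 i ^ 2)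
    (g := fun k a => eval a.1 (g k)) (by have := fun i j => hcomp (F i j); fun_prop)
    (by fun_prop) (fun k => hcomp (g k))
    (fun a ha => by
      have hw : a.2 ≠ 0 := by
        intro h
        have := ha.2
        simp [h] at this
      obtain ⟨i, hi⟩ := Function.ne_iff.1 hw
      exact sum_pos' (fun i _ => sq_nonneg _) ⟨i, mem_univ i, sq_pos_of_ne_zero hi⟩)
    (fun k a ha => hg1 k a.1 ha.1)
    (fun a ha h => hpos a.1 ha.1 a.2 (mem_sphere_zero_iff_norm.1 ha.2) h)
  obtain ⟨N, hN⟩ := exists_isSOSMatrix_pow_smul (P := residualForm F g f e s)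
    (d := 2 * f + (2 * s + 1) * e)
    (by
      rw [residualForm]
      exact (hFs.smul _).sub (isSymm_diagonal _))
    (isHomogeneous_residualForm hF hg s)
    (fun x hx w hw => by
      have hx2 : 0 < ∑ i, x i ^ 2 := by
        obtain ⟨i, hi⟩ := Function.ne_iff.1 hx
        exact sum_pos' (fun i _ => sq_nonneg _) ⟨i, mem_univ i, sq_pos_of_ne_zero hi⟩
      set r := √(∑ i, x i ^ 2) with hr
      have hr0 : 0 < r := Real.sqrt_pos.2 hx2
      have hr2 : r ^ 2 = ∑ i, x i ^ 2 := Real.sq_sqrt hx2.le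
      have hz : ∑ i, (r⁻¹ • x) i ^ 2 = 1 := by
        simp only [Pi.smul_apply, smul_eq_mul, mul_pow, ← mul_sum, ← hr2]
        field_simp
      have hxr : x = r • (r⁻¹ • x) := by rw [smul_smul, mul_inv_cancel₀ hr0.ne', one_smul]
      have key := hs (r⁻¹ • x, w) ⟨hz, mem_sphere_zero_iff_norm.2 hw⟩
      rw [hxr]
      simp only [(isHomogeneous_residualForm hF hg s _ _).eval_smul_eq r,
        eval_residualForm F g f e s hz]
      have : ∀ c : ℝ, ∑ i, ∑ j, w i * w j * (r ^ (2 * (2 * f + (2 * s + 1) * e)) *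
          (eval (r⁻¹ • x) (F i j) - if i = j then c else 0)) =
          r ^ (2 * (2 * f + (2 * s + 1) * e)) *
            (∑ i, ∑ j, w i * w j * eval (r⁻¹ • x) (F i j) - c * ∑ i, w i ^ 2) := fun c => by
        rw [mul_sub, mul_sum, mul_sum, mul_sum, ← sum_sub_distrib]
        refine sum_congr rfl fun i _ => ?_
        simp only [mul_sub, sum_sub_distrib, mul_ite, mul_zero, sum_ite_eq, mem_univ, if_true,
          mul_sum]
        congr 1
        · exact sum_congr rfl fun j _ => by ring
        · ring
      rw [this]
      exact mul_pos (by positivity) key)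
  exact ⟨s, N, hN⟩

/-- The SOS matrix `∑ₖ p_k(x)² h_k(y)² (I ⊗ v_k v_kᵀ)`. -/
noncomputable def weightMatrix {n m q : ℕ} {ι κ : Type*} [DecidableEq ι] [Fintype κ]
    (p : κ → MvPolynomial (Fin n) ℝ) (t : κ → (Fin q → ℝ) × MvPolynomial (Fin m) ℝ) :
    Matrix (ι × Fin q) (ι × Fin q) (MvPolynomial (Fin n ⊕ Fin m) ℝ) :=
  Matrix.of fun a b => if a.1 = b.1 then ∑ k, (rename Sum.inl (p k)) ^ 2 *
    (rename Sum.inr (t k).2) ^ 2 * C ((t k).1 a.2 * (t k).1 b.2) else 0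

theorem isSOSMatrix_weightMatrix {n m q : ℕ} {ι κ : Type*} [Fintype ι] [DecidableEq ι]
    [Fintype κ] (p : κ → MvPolynomial (Fin n) ℝ)
    (t : κ → (Fin q → ℝ) × MvPolynomial (Fin m) ℝ) :
    IsSOSMatrix (weightMatrix (ι := ι) p t) := by
  convert isSOSMatrix_transpose_mul_self (Matrix.of fun (l : ι × κ) (a : ι × Fin q) =>
    if l.1 = a.1 then rename Sum.inl (p l.2) * rename Sum.inr (t l.2).2 * C ((t l.2).1 a.2)
    else 0) using 1
  ext1 a b
  simp only [weightMatrix, of_apply, mul_apply, transpose_apply, Fintype.sum_prod_type, ite_mul,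
    zero_mul, mul_ite, mul_zero]
  rw [sum_comm]
  simp only [sum_ite_eq', mem_univ, if_true, eq_comm (a := b.1)]
  split_ifs
  · refine sum_congr rfl fun k _ => ?_
    rw [C_mul]
    ring
  · simp

theorem isHomogeneousX_weightMatrix {n m q d : ℕ} {ι κ : Type*} [DecidableEq ι] [Fintype κ]
    {p : κ → MvPolynomial (Fin n) ℝ} (hp : ∀ k, (p k).IsHomogeneous d)
    (t : κ → (Fin q → ℝ) × MvPolynomial (Fin m) ℝ) (a b : ι × Fin q) :
    IsHomogeneousX (weightMatrix p t a b) (2 * d) := by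
  simp only [weightMatrix, of_apply]
  split_ifs
  · refine IsHomogeneousX.sum fun k _ => ?_
    simpa using (((hp k).rename_inl (m := m)).pow 2).mul
      ((isHomogeneousX_rename_inr (n := n) (t k).2).pow 2) |>.mul
      (isHomogeneousX_C ((t k).1 a.2 * (t k).1 b.2))
  · exact isHomogeneousX_zero _

theorem lram_weightMatrix {n m q : ℕ} {ι κ : Type*} [DecidableEq ι] [Fintype κ]
    (p : κ → MvPolynomial (Fin n) ℝ) (t : κ → (Fin q → ℝ) × MvPolynomial (Fin m) ℝ)
    (G : Matrix (Fin q) (Fin q) (MvPolynomial (Fin n ⊕ Fin m) ℝ)) :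
    lram (weightMatrix (ι := ι) p t) G =
      Matrix.diagonal fun _ => ∑ k, rename Sum.inl (p k ^ 2) * testPoly G (t k) := by
  ext1 i j
  simp only [lram, weightMatrix, of_apply, diagonal_apply, eq_comm (a := j)]
  split_ifs with h
  · simp only [sum_mul, testPoly, mul_sum]
    rw [sum_congr rfl fun a _ => sum_comm, sum_comm]
    refine sum_congr rfl fun k _ => sum_congr rfl fun a _ => sum_congr rfl fun c _ => ?_
    rw [map_pow, C_mul, C_mul]
    ring
  · simp

/-- homogeneous Putinar–Vasilescu-type Positivstellensatz with
universal quantifiers (Theorem C). -/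
theorem homogeneous_positivstellensatz {n m p q : ℕ}
    (Y : Set (Fin m → ℝ)) (hY : IsClosed Y)
    (ν : Measure (Fin m → ℝ)) (hsupp : hasSupport ν Y) (hmom : momentsFinite ν)
    (hcar : Carleman ν)
    (F : Matrix (Fin p) (Fin p) (MvPolynomial (Fin n) ℝ)) (hFs : F.IsSymm)
    (G : Matrix (Fin q) (Fin q) (MvPolynomial (Fin n ⊕ Fin m) ℝ)) (hGs : G.IsSymm)
    (dF dG : ℕ) (hdF : Even dF) (hdG : Even dG)
    (hF : ∀ i j, (F i j).IsHomogeneous dF)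
    (hG : ∀ i j, IsHomogeneousX (G i j) dG)
    (hpd : ∀ x : Fin n → ℝ, x ≠ 0 →
      (∀ y ∈ Y, (evalMat (Sum.elim x y) G).PosSemidef) → (evalMat x F).PosDef) :
    ∃ (N : ℕ) (S0 : Matrix (Fin p) (Fin p) (MvPolynomial (Fin n) ℝ))
      (Sg : Matrix (Fin p × Fin q) (Fin p × Fin q) (MvPolynomial (Fin n ⊕ Fin m) ℝ)),
      IsSOSMatrix S0 ∧ IsSOSMatrix Sg ∧
      (∀ i j, (S0 i j).IsHomogeneous (2 * N + dF)) ∧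
      (∀ a b, IsHomogeneousX (Sg a b) (2 * N + dF - dG)) ∧
      ((∑ i, (X i : MvPolynomial (Fin n) ℝ) ^ 2) ^ N) • F =
        S0 + (lram Sg G).map (integY ν) := by
  obtain ⟨f, rfl⟩ := hdF.two_dvd
  obtain ⟨e, rfl⟩ := hdG.two_dvd
  obtain ⟨t, ht1, htpos⟩ := exists_finset_testPoly hsupp hmom hcar hGs hpd
  have hg : ∀ k : t, (integY ν (testPoly G k)).IsHomogeneous (2 * e) :=
    fun k => (isHomogeneousX_testPoly hG _).integY ν
  obtain ⟨s, N, hS⟩ := exists_isSOSMatrix_residualForm hFs hF hg (isCompact_sum_sq_eq_one n)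
    (fun k => ht1 k k.2) fun x hx w hw h => htpos x hx w hw fun k hk => h ⟨k, hk⟩
  set r : MvPolynomial (Fin n) ℝ := ∑ i, X i ^ 2 with hr
  refine ⟨2 * N + (f + (2 * s + 1) * e), _,
    weightMatrix (fun k : t => r ^ N * (r ^ f * (r ^ e - integY ν (testPoly G k)) ^ s))
      (fun k => k.1), hS, isSOSMatrix_weightMatrix _ _, fun i j => ?_, fun a b => ?_, ?_⟩
  · convert (isHomogeneous_sum_X_sq_pow (2 * N)).mul
      (isHomogeneous_residualForm hF hg s i j) using 1
    · rfl
    · ring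
  · convert isHomogeneousX_weightMatrix (fun k : t => (isHomogeneous_sum_X_sq_pow N).mul
      ((isHomogeneous_sum_X_sq_pow f).mul (((isHomogeneous_sum_X_sq_pow e).sub (hg k)).pow s)))
      (fun k => k.1) a b using 1
    rw [Nat.sub_eq_iff_eq_add (by nlinarith [Nat.zero_le (s * e)])]
    ring
  · rw [lram_weightMatrix, diagonal_map (by simp [integY]), integY_sum_rename_mul hmom]
    refine Matrix.ext fun i j => ?_
    simp only [residualForm, Matrix.add_apply, Matrix.sub_apply, Matrix.smul_apply, smul_eq_mul,
      diagonal_apply, ← hr]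
    split_ifs
    · rw [mul_sub, mul_sum, sub_add, ← sum_sub_distrib, sum_eq_zero fun k _ => by ring]
      ring
    · ring
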